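/- arXiv:2212.09933 — 2 statements merged into one kernel-verified Lean document; each statement's English description precedes it below -/
import Mathlib

section
/- There exists a constant C > 0 such that for all n ≥ 2, Pval(L^n) ≤ C · 2^{-n}. That is, the maximum fraction of the maximal isotropic subspaces of (ZMod 2)^{2n} that can simultaneously be given pairwise consistent outcomes decays exponentially: Pval(L^n) ≤ 2^{-n+O(1)}. -/
open Finset

abbrev F2 := ZMod 2
/-- `F2^{2n}`, split into the first and last `n` coordinates. -/
abbrev PV (n : ℕ) := (Fin n → F2) × (Fin n → F2)

/-- Symplectic product on `F2^{2n}`: zero iff `a₁·b₂ = a₂·b₁`. -/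
def symp {n : ℕ} (a b : PV n) : F2 :=
  (∑ i, a.1 i * b.2 i) + (∑ i, a.2 i * b.1 i)

/-- A subspace is isotropic if the symplectic product vanishes on it. -/
def IsIsotropic {n : ℕ} (S : Submodule F2 (PV n)) : Prop :=
  ∀ x ∈ S, ∀ y ∈ S, symp x y = 0

/-- `Lset n k` = `L^n_k`, the set of `k`-dimensional isotropic subspaces of `F2^{2n}`. -/
def Lset (n k : ℕ) : Set (Submodule F2 (PV n)) :=
  {S | IsIsotropic S ∧ Module.finrank F2 S = k}

/-- Integer lift of a vector over `F2`, with values in `{0,1} ⊆ ℤ`. -/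
def liftZ {n : ℕ} (v : Fin n → F2) : Fin n → ℤ := fun i => ((v i).val : ℤ)

def dotZ {n : ℕ} (a b : Fin n → ℤ) : ℤ := ∑ i, a i * b i

/-- The phase `i^{x̂₁·x̂₂} · i^{ŷ₁·ŷ₂} · i^{−((x+y)^^₁·(x+y)^^₂)} · (−1)^{x̂₂·ŷ₁}`. -/
noncomputable def phase {n : ℕ} (x y : PV n) : ℂ :=
  Complex.I ^ (dotZ (liftZ x.1) (liftZ x.2)) *
  Complex.I ^ (dotZ (liftZ y.1) (liftZ y.2)) *
  Complex.I ^ (-(dotZ (liftZ (x + y).1) (liftZ (x + y).2))) *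
  (-1 : ℂ) ^ (dotZ (liftZ x.2) (liftZ y.1))

/-- `w(x,y) ∈ {0,1} ⊆ F2`: zero iff the phase equals `1`. -/
noncomputable def wght {n : ℕ} (x y : PV n) : F2 :=
  if phase x y = 1 then 0 else 1

/-- An outcome of an isotropic subspace `S` is `f : S → F2` with
`f(x+y) = f(x)+f(y)+w(x,y)`. -/
def IsOutcome {n : ℕ} (S : Submodule F2 (PV n)) (f : S → F2) : Prop :=
  ∀ x y : S, f (x + y) = f x + f y + wght (x : PV n) (y : PV n)

/-- Two outcomes are consistent if they agree on the intersection of their domains. -/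
def ConsistentOn {n : ℕ} {S₁ S₂ : Submodule F2 (PV n)} (f₁ : S₁ → F2) (f₂ : S₂ → F2) : Prop :=
  ∀ v (h1 : v ∈ S₁) (h2 : v ∈ S₂), f₁ ⟨v, h1⟩ = f₂ ⟨v, h2⟩

namespace PvalAux

variable {n : ℕ}

lemma symp_add_left (a b c : PV n) : symp (a + b) c = symp a c + symp b c := by
  simp only [symp, Prod.fst_add, Prod.snd_add, Pi.add_apply, add_mul, Finset.sum_add_distrib]
  ring

lemma symp_add_right (a b c : PV n) : symp a (b + c) = symp a b + symp a c := by
  simp only [symp, Prod.fst_add, Prod.snd_add, Pi.add_apply, mul_add, Finset.sum_add_distrib]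
  ring

lemma symp_smul_left (r : F2) (a b : PV n) : symp (r • a) b = r * symp a b := by
  simp only [symp, Prod.smul_fst, Prod.smul_snd, Pi.smul_apply, smul_eq_mul, mul_add,
    Finset.mul_sum, mul_assoc]

lemma symp_comm (a b : PV n) : symp a b = symp b a := by
  simp only [symp]
  rw [add_comm]
  congr 1 <;> exact Finset.sum_congr rfl fun i _ => mul_comm _ _

lemma symp_smul_right (r : F2) (a b : PV n) : symp a (r • b) = r * symp a b := by
  rw [symp_comm, symp_smul_left, symp_comm]

lemma symp_self (a : PV n) : symp a a = 0 := by
  have : symp a a = (∑ i, a.1 i * a.2 i) + (∑ i, a.1 i * a.2 i) := by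
    simp only [symp, mul_comm]
  rw [this]
  exact CharTwo.add_self_eq_zero _

lemma symp_zero_left (a : PV n) : symp 0 a = 0 := by simp [symp]
lemma symp_zero_right (a : PV n) : symp a 0 = 0 := by simp [symp]

lemma f2_cases (r : F2) : r = 0 ∨ r = 1 := by revert r; decide
lemma f2_ne (r : F2) : r ≠ 0 ↔ r = 1 := by revert r; decide

lemma exists_symp_one {z : PV n} (hz : z ≠ 0) : ∃ t : PV n, symp t z = 1 := by
  by_contra! h
  apply hz
  have h0 : ∀ t, symp t z = 0 := fun t => (f2_cases _).resolve_right (h t)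
  ext i
  · have := h0 (0, Pi.single i 1)
    simpa [symp, Pi.single_apply] using this
  · have := h0 (Pi.single i 1, 0)
    simpa [symp, Pi.single_apply] using this

/-- The symplectic form as a bilinear form. -/
def sform (n : ℕ) : LinearMap.BilinForm F2 (PV n) :=
  LinearMap.mk₂ F2 symp symp_add_left symp_smul_left symp_add_right symp_smul_right

lemma sform_apply (a b : PV n) : sform n a b = symp a b := rfl

lemma card_submodule (S : Submodule F2 (PV n)) [Fintype S] :
    Fintype.card S = 2 ^ Module.finrank F2 S := by
  rw [Module.card_eq_pow_finrank (K := F2)]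
  simp [ZMod.card]

open Classical in
lemma card_filter_mem (S : Submodule F2 (PV n)) :
    (univ.filter (fun x : PV n => x ∈ S)).card = 2 ^ Module.finrank F2 S := by
  rw [← card_submodule, Fintype.card_subtype]

lemma finrank_PV : Module.finrank F2 (PV n) = 2 * n := by
  simp [Module.finrank_prod, two_mul]

lemma card_PV : Fintype.card (PV n) = 2 ^ (2 * n) := by
  rw [Module.card_eq_pow_finrank (K := F2), finrank_PV]; simp [ZMod.card]

lemma finrank_orth (U : Submodule F2 (PV n)) :
    Module.finrank F2 ((sform n).orthogonal U) = 2 * n - Module.finrank F2 U := by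
  rw [← finrank_PV (n := n)]
  apply LinearMap.BilinForm.finrank_orthogonal
  refine ⟨fun x hx => ?_, fun x hx => ?_⟩
  · by_contra h
    obtain ⟨t, ht⟩ := exists_symp_one h
    have := hx t
    rw [sform_apply, symp_comm, ht] at this
    exact one_ne_zero this
  · by_contra h
    obtain ⟨t, ht⟩ := exists_symp_one h
    have := hx t
    rw [sform_apply, ht] at this
    exact one_ne_zero this

lemma mem_orth {U : Submodule F2 (PV n)} {x : PV n} :
    x ∈ (sform n).orthogonal U ↔ ∀ u ∈ U, symp u x = 0 := by
  rfl

lemma isotropic_sup {U : Submodule F2 (PV n)} (hU : IsIsotropic U) {x : PV n}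
    (hx : ∀ u ∈ U, symp u x = 0) : IsIsotropic (U ⊔ Submodule.span F2 {x}) := by
  intro a ha b hb
  rw [Submodule.mem_sup] at ha hb
  obtain ⟨u, hu, p, hp, rfl⟩ := ha
  obtain ⟨v, hv, q, hq, rfl⟩ := hb
  rw [Submodule.mem_span_singleton] at hp hq
  obtain ⟨r, rfl⟩ := hp
  obtain ⟨s, rfl⟩ := hq
  simp [symp_add_left, symp_add_right, symp_smul_left, symp_smul_right, hU u hu v hv, hx u hu,
    symp_self, symp_comm x v, hx v hv]

lemma finrank_sup_span {U : Submodule F2 (PV n)} {x : PV n} (hx : x ∉ U) :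
    Module.finrank F2 (U ⊔ Submodule.span F2 {x} : Submodule F2 (PV n)) =
      Module.finrank F2 U + 1 := by
  have h0 : x ≠ 0 := fun h => hx (h ▸ U.zero_mem)
  have h1 : U ⊓ Submodule.span F2 {x} = ⊥ := by
    rw [← disjoint_iff, disjoint_comm]
    exact (Submodule.disjoint_span_singleton' h0).2 hx |>.symm
  have := Submodule.finrank_sup_add_finrank_inf_eq U (Submodule.span F2 {x})
  rw [h1, finrank_bot, finrank_span_singleton h0] at this
  simpa using this

noncomputable instance : Fintype (Submodule F2 (PV n)) := Fintype.ofFinite _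

open Classical in
/-- The maximal isotropic subspaces containing `U`. -/
noncomputable def LU (U : Submodule F2 (PV n)) : Finset (Submodule F2 (PV n)) :=
  univ.filter fun S => S ∈ Lset n n ∧ U ≤ S

lemma mem_LU {U S : Submodule F2 (PV n)} : S ∈ LU U ↔ S ∈ Lset n n ∧ U ≤ S := by
  simp [LU]

/-- The number of maximal isotropic subspaces in dimension `2j`. -/
def NN (j : ℕ) : ℕ := ∏ i ∈ range j, (2 ^ (i + 1) + 1)

lemma NN_succ (j : ℕ) : NN (j + 1) = NN j * (2 ^ (j + 1) + 1) := by
  simp [NN, Finset.prod_range_succ]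

lemma NN_pos (j : ℕ) : 0 < NN j := Finset.prod_pos fun _ _ => by positivity

open Classical in
lemma LU_filter_mem (U : Submodule F2 (PV n)) (x : PV n) :
    (LU U).filter (fun S => x ∈ S) = LU (U ⊔ Submodule.span F2 {x}) := by
  ext S
  simp [mem_LU, and_assoc]

open Classical in
lemma card_LU (j : ℕ) : ∀ U : Submodule F2 (PV n), IsIsotropic U →
    Module.finrank F2 U + j = n → (LU U).card = NN j := by
  induction j with
  | zero =>
    intro U hU hk
    have : LU U = {U} := by
      ext S
      rw [mem_LU, mem_singleton]
      constructor
      · rintro ⟨hS, hUS⟩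
        exact (Submodule.eq_of_le_of_finrank_eq hUS (by rw [hS.2]; simpa using hk)).symm
      · rintro rfl
        exact ⟨⟨hU, by simpa using hk⟩, le_rfl⟩
    rw [this]; simp [NN]
  | succ j ih =>
    intro U hU hk
    set k := Module.finrank F2 U with hkdef
    have hdc := Finset.sum_card_bipartiteAbove_eq_sum_card_bipartiteBelow
      (s := LU U) (t := univ.filter fun x : PV n => x ∈ (sform n).orthogonal U ∧ x ∉ U)
      (fun S x => x ∈ S)
    have hle : U ≤ (sform n).orthogonal U := fun x hx => mem_orth.2 fun u hu => hU u hu x hx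
    have hsub : ∀ A B : Submodule F2 (PV n), A ≤ B →
        (univ.filter fun x : PV n => x ∈ B ∧ x ∉ A).card =
          2 ^ Module.finrank F2 B - 2 ^ Module.finrank F2 A := by
      intro A B hAB
      rw [← card_filter_mem, ← card_filter_mem, ← Finset.card_sdiff_of_subset]
      · congr 1; ext x; simp
      · intro x; simpa using fun h => hAB h
    have h1 : ∀ S ∈ LU U, (Finset.bipartiteAbove (fun S x => x ∈ S)
        (univ.filter fun x : PV n => x ∈ (sform n).orthogonal U ∧ x ∉ U) S).card
          = 2 ^ n - 2 ^ k := by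
      intro S hS
      rw [mem_LU] at hS
      have := hsub U S hS.2
      rw [hS.1.2] at this
      rw [← this]
      congr 1
      ext x
      simp only [bipartiteAbove, mem_filter, mem_univ, true_and]
      constructor
      · rintro ⟨⟨_, h⟩, h'⟩; exact ⟨h', h⟩
      · rintro ⟨h, h'⟩; exact ⟨⟨mem_orth.2 fun u hu => hS.1.1 u (hS.2 hu) x h, h'⟩, h⟩
    have h2 : ∀ x ∈ (univ.filter fun x : PV n => x ∈ (sform n).orthogonal U ∧ x ∉ U),
        (Finset.bipartiteBelow (fun (S : Submodule F2 (PV n)) x => x ∈ S) (LU U) x).card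
          = NN j := by
      intro x hx
      simp only [mem_filter, mem_univ, true_and] at hx
      rw [bipartiteBelow, LU_filter_mem]
      exact ih _ (isotropic_sup hU (mem_orth.1 hx.1)) (by rw [finrank_sup_span hx.2]; omega)
    rw [Finset.sum_congr rfl h1, Finset.sum_congr rfl h2, sum_const, sum_const, hsub _ _ hle,
      finrank_orth, ← hkdef, smul_eq_mul, smul_eq_mul] at hdc
    rw [NN_succ]
    have e1 : 2 ^ n - 2 ^ k = 2 ^ k * (2 ^ (j + 1) - 1) := by
      rw [Nat.mul_sub, ← pow_add, hk, mul_one]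
    have e2 : 2 ^ (2 * n - k) - 2 ^ k = 2 ^ k * (2 ^ (j + 1) - 1) * (2 ^ (j + 1) + 1) := by
      have : 2 * n - k = k + (j + 1) + (j + 1) := by omega
      rw [this, mul_assoc, mul_comm (2 ^ (j+1) - 1), ← Nat.sq_sub_sq (2 ^ (j+1)) 1, Nat.mul_sub]
      congr 1
      · ring
      · simp
    rw [e1, e2] at hdc
    have hpos : 0 < 2 ^ k * (2 ^ (j + 1) - 1) := by
      have : 2 ≤ 2 ^ (j + 1) := by rw [pow_succ]; have := Nat.one_le_two_pow (n := j); omega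
      apply Nat.mul_pos (by positivity); omega
    apply Nat.eq_of_mul_eq_mul_right hpos
    rw [hdc]; ring

end PvalAux

namespace PvalAux
variable {n : ℕ}

/-- The sign character of `F2`. -/
def chi (r : F2) : ℝ := if r = 0 then 1 else -1

lemma chi_add (r s : F2) : chi (r + s) = chi r * chi s := by
  rcases f2_cases r with rfl | rfl <;> rcases f2_cases s with rfl | rfl <;>
    simp [chi, show (1 : F2) + 1 = 0 from by decide]

lemma chi_zero : chi 0 = 1 := by simp [chi]
lemma chi_one : chi 1 = -1 := by simp [chi]

lemma sum_chi {z : PV n} (hz : z ≠ 0) : ∑ x : PV n, chi (symp x z) = 0 := by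
  obtain ⟨t, ht⟩ := exists_symp_one hz
  have h := Equiv.sum_comp (Equiv.addRight t) (fun x : PV n => chi (symp x z))
  simp only [Equiv.coe_addRight, symp_add_left, chi_add, ht, chi_one] at h
  rw [← Finset.sum_mul] at h
  linarith

lemma add_self_PV (x : PV n) : x + x = 0 := by
  ext i <;> exact CharTwo.add_self_eq_zero _

lemma add_eq_zero_PV {x y : PV n} : x + y = 0 ↔ x = y := by
  constructor
  · intro h
    calc x = x + (y + y) := by rw [add_self_PV, add_zero]
      _ = y := by rw [← add_assoc, h, zero_add]
  · rintro rfl; exact add_self_PV x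

lemma char_sum_bound (B : Finset (PV n)) :
    ∑ x ∈ B, ∑ y ∈ B, chi (symp x y) ≤ 2 ^ n * (B.card : ℝ) := by
  classical
  set F : PV n → ℝ := fun x => ∑ y ∈ B, chi (symp x y) with hF
  have h1 : ∑ x : PV n, F x ^ 2 = 2 ^ (2 * n) * (B.card : ℝ) := by
    have : ∀ x, F x ^ 2 = ∑ y ∈ B, ∑ y' ∈ B, chi (symp x (y + y')) := by
      intro x
      rw [sq, hF]
      simp only
      rw [Finset.sum_mul_sum]
      simp [symp_add_right, chi_add]
    simp_rw [this]
    rw [Finset.sum_comm]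
    have h2 : ∀ y ∈ B, ∑ x : PV n, ∑ y' ∈ B, chi (symp x (y + y')) = 2 ^ (2 * n) := by
      intro y hy
      rw [Finset.sum_comm, Finset.sum_eq_single y]
      · simp only [add_self_PV, symp_zero_right, chi_zero, sum_const, card_univ, card_PV]
        simp
      · intro y' _ hne
        exact sum_chi fun h => hne (add_eq_zero_PV.1 h).symm
      · exact fun h => absurd hy h
    rw [Finset.sum_congr rfl h2]; simp [mul_comm]
  have h3 : (∑ x ∈ B, F x) ^ 2 ≤ (B.card : ℝ) * ∑ x ∈ B, F x ^ 2 := sq_sum_le_card_mul_sum_sq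
  have h4 : ∑ x ∈ B, F x ^ 2 ≤ ∑ x : PV n, F x ^ 2 :=
    Finset.sum_le_sum_of_subset_of_nonneg (subset_univ _) fun _ _ _ => sq_nonneg _
  apply le_of_sq_le_sq _ (by positivity)
  calc (∑ x ∈ B, F x) ^ 2 ≤ (B.card : ℝ) * (2 ^ (2 * n) * (B.card : ℝ)) := by
        rw [← h1]; exact h3.trans (mul_le_mul_of_nonneg_left h4 (by positivity))
    _ = _ := by ring

open Classical in
lemma first_moment (U : Submodule F2 (PV n)) (hU : IsIsotropic U) (j : ℕ)
    (hk : Module.finrank F2 U + (j + 1) = n) (B : Finset (PV n))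
    (hB : ∀ x ∈ B, (∀ u ∈ U, symp u x = 0) ∧ x ∉ U) :
    ∑ S ∈ LU U, ((B.filter (fun x => x ∈ S)).card : ℝ) = B.card * NN j := by
  have hdc := Finset.sum_card_bipartiteAbove_eq_sum_card_bipartiteBelow
      (s := LU U) (t := B) (fun S x => x ∈ S)
  have h2 : ∀ x ∈ B, (Finset.bipartiteBelow (fun (S : Submodule F2 (PV n)) x => x ∈ S)
      (LU U) x).card = NN j := by
    intro x hx
    rw [bipartiteBelow, LU_filter_mem]
    exact card_LU j _ (isotropic_sup hU (hB x hx).1)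
      (by rw [finrank_sup_span (hB x hx).2]; omega)
  rw [Finset.sum_congr rfl h2, sum_const, smul_eq_mul] at hdc
  exact_mod_cast hdc

open Classical in
lemma second_moment (U : Submodule F2 (PV n)) (hU : IsIsotropic U) (j : ℕ)
    (hk : Module.finrank F2 U + (j + 2) = n) (B : Finset (PV n))
    (hB : ∀ x ∈ B, (∀ u ∈ U, symp u x = 0) ∧ x ∉ U) :
    ∑ S ∈ LU U, ((B.filter (fun x => x ∈ S)).card : ℝ) ^ 2 ≤
      B.card * 2 ^ (Module.finrank F2 U) * NN (j + 1) +
      NN j * (((B.card : ℝ) ^ 2 + 2 ^ n * B.card) / 2) := by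
  have e1 : ∀ S : Submodule F2 (PV n), ((B.filter (fun x => x ∈ S)).card : ℝ) ^ 2 =
      ∑ x ∈ B, ∑ y ∈ B, (if x ∈ S ∧ y ∈ S then (1 : ℝ) else 0) := by
    intro S
    rw [sq, Finset.card_filter]
    push_cast
    rw [Finset.sum_mul_sum]
    refine Finset.sum_congr rfl fun x _ => Finset.sum_congr rfl fun y _ => ?_
    by_cases hx : x ∈ S <;> by_cases hy : y ∈ S <;> simp [hx, hy]
  simp_rw [e1]
  rw [Finset.sum_comm]
  have e2 : ∀ x ∈ B, ∀ y ∈ B, ∑ S ∈ LU U, (if x ∈ S ∧ y ∈ S then (1 : ℝ) else 0) ≤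
      (if x + y ∈ U then (NN (j + 1) : ℝ) else 0) + NN j * ((1 + chi (symp x y)) / 2) := by
    intro x hx y hy
    obtain ⟨hx1, hx2⟩ := hB x hx
    obtain ⟨hy1, hy2⟩ := hB y hy
    rw [← Finset.sum_filter, sum_const, nsmul_eq_mul, mul_one]
    by_cases hxy : x + y ∈ U
    · rw [if_pos hxy]
      have h1 : ((LU U).filter (fun S => x ∈ S ∧ y ∈ S)).card ≤ NN (j + 1) := by
        rw [← card_LU (j + 1) _ (isotropic_sup hU hx1) (by rw [finrank_sup_span hx2]; omega),
          ← LU_filter_mem]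
        apply Finset.card_le_card
        intro S hS
        simp only [mem_filter] at hS ⊢
        exact ⟨hS.1, hS.2.1⟩
      have h2 : (0 : ℝ) ≤ NN j * ((1 + chi (symp x y)) / 2) := by
        apply mul_nonneg (by positivity)
        unfold chi; split_ifs <;> norm_num
      have h3 : (((LU U).filter (fun S => x ∈ S ∧ y ∈ S)).card : ℝ) ≤ NN (j + 1) := by
        exact_mod_cast h1
      linarith
    · rw [if_neg hxy, zero_add]
      rcases f2_cases (symp x y) with h0 | h0
      · rw [h0, chi_zero]
        have hy3 : y ∉ U ⊔ Submodule.span F2 {x} := by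
          intro h
          rw [Submodule.mem_sup] at h
          obtain ⟨u, hu, p, hp, rfl⟩ := h
          rw [Submodule.mem_span_singleton] at hp
          obtain ⟨r, rfl⟩ := hp
          rcases f2_cases r with rfl | rfl
          · apply hy2; simpa using hu
          · apply hxy
            rw [one_smul, add_comm u x, ← add_assoc, add_self_PV, zero_add]; exact hu
        have hy4 : ∀ v ∈ U ⊔ Submodule.span F2 {x}, symp v y = 0 := by
          intro v hv
          rw [Submodule.mem_sup] at hv
          obtain ⟨u, hu, p, hp, rfl⟩ := hv
          rw [Submodule.mem_span_singleton] at hp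
          obtain ⟨r, rfl⟩ := hp
          simp [symp_add_left, symp_smul_left, hy1 u hu, h0]
        have h1 := card_LU j _ (isotropic_sup (isotropic_sup hU hx1) hy4)
          (by rw [finrank_sup_span hy3, finrank_sup_span hx2]; omega)
        rw [← LU_filter_mem, ← LU_filter_mem, Finset.filter_filter] at h1
        rw [h1]; norm_num
      · rw [h0, chi_one]
        have : (LU U).filter (fun S => x ∈ S ∧ y ∈ S) = ∅ := by
          apply Finset.filter_eq_empty_iff.2
          rintro S hS ⟨h1, h2⟩
          have := (mem_LU.1 hS).1.1 x h1 y h2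
          rw [h0] at this
          exact one_ne_zero this
        rw [this]; simp
  have e3 : ∀ x ∈ B, ∑ y ∈ B, (if x + y ∈ U then (NN (j + 1) : ℝ) else 0) ≤
      2 ^ (Module.finrank F2 U) * NN (j + 1) := by
    intro x hx
    rw [← Finset.sum_filter, sum_const, nsmul_eq_mul]
    apply mul_le_mul_of_nonneg_right _ (by positivity)
    have : (B.filter fun y => x + y ∈ U).card ≤ 2 ^ (Module.finrank F2 U) := by
      rw [← card_filter_mem]
      apply Finset.card_le_card_of_injOn (fun y => x + y)
      · intro y hy
        rw [Finset.mem_coe, mem_filter] at hy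
        simpa using hy.2
      · intro y _ z _ h
        exact add_left_cancel h
    exact_mod_cast this
  calc _ = ∑ x ∈ B, ∑ y ∈ B, ∑ S ∈ LU U, (if x ∈ S ∧ y ∈ S then (1 : ℝ) else 0) :=
        Finset.sum_congr rfl fun x _ => Finset.sum_comm
    _ ≤ ∑ x ∈ B, ∑ y ∈ B, ((if x + y ∈ U then (NN (j + 1) : ℝ) else 0) +
          NN j * ((1 + chi (symp x y)) / 2)) :=
        Finset.sum_le_sum fun x hx => Finset.sum_le_sum fun y hy => e2 x hx y hy
    _ = (∑ x ∈ B, ∑ y ∈ B, (if x + y ∈ U then (NN (j + 1) : ℝ) else 0)) +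
          NN j * (((B.card : ℝ) ^ 2 + ∑ x ∈ B, ∑ y ∈ B, chi (symp x y)) / 2) := by
        simp_rw [Finset.sum_add_distrib, ← Finset.mul_sum, ← Finset.sum_div,
          Finset.sum_add_distrib]
        simp [sq]
    _ ≤ B.card * 2 ^ (Module.finrank F2 U) * NN (j + 1) +
      NN j * (((B.card : ℝ) ^ 2 + 2 ^ n * B.card) / 2) := by
        apply add_le_add
        · refine (Finset.sum_le_sum e3).trans (le_of_eq ?_)
          rw [sum_const, nsmul_eq_mul, mul_assoc]
        · apply mul_le_mul_of_nonneg_left _ (by positivity)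
          have := char_sum_bound B
          linarith

open Classical in
lemma chebyshev (U : Submodule F2 (PV n)) (hU : IsIsotropic U) (j : ℕ)
    (hk : Module.finrank F2 U + (j + 2) = n) (B : Finset (PV n))
    (hB : ∀ x ∈ B, (∀ u ∈ U, symp u x = 0) ∧ x ∉ U)
    (A : Finset (Submodule F2 (PV n))) (hA : A ⊆ LU U)
    (hAB : ∀ S ∈ A, 2 * ((B.filter (fun x => x ∈ S)).card : ℝ) * (2 ^ (j + 2) + 1) ≤ B.card) :
    (A.card : ℝ) * B.card ≤ 12 * 2 ^ n * NN (j + 2) := by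
  set b : ℝ := (B.card : ℝ) with hb
  set k := Module.finrank F2 U with hkd
  set q : ℝ := 2 ^ (j + 2) with hq
  have hb0 : 0 ≤ b := by positivity
  have hq0 : 0 < q := by positivity
  set X : Submodule F2 (PV n) → ℝ := fun S => ((B.filter (fun x => x ∈ S)).card : ℝ) with hX
  have hm1 : ∑ S ∈ LU U, X S = b * NN (j + 1) := first_moment U hU (j + 1) hk B hB
  have hm2 : ∑ S ∈ LU U, X S ^ 2 ≤ b * 2 ^ k * NN (j + 1) +
      NN j * ((b ^ 2 + 2 ^ n * b) / 2) := second_moment U hU j hk B hB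
  have hN : ((LU U).card : ℝ) = NN (j + 2) := by rw [card_LU (j + 2) U hU hk]
  have hN2 : (NN (j + 2) : ℝ) = NN (j + 1) * (q + 1) := by
    rw [NN_succ]; push_cast; rw [hq]
  have hN1 : (NN (j + 1) : ℝ) = NN j * (q + 2) / 2 := by
    rw [NN_succ]; push_cast; rw [hq]; ring
  have hn : (2 : ℝ) ^ n = 2 ^ k * q := by rw [hq, ← pow_add, hk]
  have hN0 : (0 : ℝ) < NN j := by exact_mod_cast NN_pos j
  have hX0 : ∀ S, 0 ≤ X S := fun S => by positivity
  have hq4 : 4 ≤ q := by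
    rw [hq, pow_add]; have : (1 : ℝ) ≤ 2 ^ j := one_le_pow₀ (by norm_num)
    linarith
  have hAX : ∀ S ∈ A, 2 * X S * (q + 1) ≤ b := hAB
  clear_value X q b
  have hq1 : 0 < q + 1 := by linarith
  obtain ⟨e, hbe⟩ : ∃ e, b = e * (q + 1) := ⟨b / (q + 1), by field_simp⟩
  have hvar : ∑ S ∈ LU U, (X S - e) ^ 2 = ∑ S ∈ LU U, X S ^ 2 - e ^ 2 * NN (j + 2) := by
    have : ∀ S, (X S - e) ^ 2 = X S ^ 2 - 2 * e * X S + e ^ 2 := fun S => by ring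
    simp_rw [this, Finset.sum_add_distrib, Finset.sum_sub_distrib, ← Finset.mul_sum, hm1,
      sum_const, nsmul_eq_mul, hN, hN2]
    rw [hbe]; ring
  have hlow : (A.card : ℝ) * (e ^ 2 / 4) ≤ ∑ S ∈ LU U, (X S - e) ^ 2 := by
    calc (A.card : ℝ) * (e ^ 2 / 4) = ∑ S ∈ A, e ^ 2 / 4 := by simp
      _ ≤ ∑ S ∈ A, (X S - e) ^ 2 := by
        apply Finset.sum_le_sum
        intro S hS
        have h1 : 2 * X S * (q + 1) ≤ e * (q + 1) := by rw [← hbe]; exact hAX S hS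
        have h2 : 2 * X S ≤ e := le_of_mul_le_mul_right h1 hq1
        have h3 : 0 ≤ X S := hX0 S
        nlinarith
      _ ≤ _ := Finset.sum_le_sum_of_subset_of_nonneg hA fun _ _ _ => sq_nonneg _
  rcases hb0.eq_or_lt with h0 | h0
  · rw [← h0, mul_zero]; positivity
  have he1 : 0 < e := by
    by_contra! h
    nlinarith
  have hK : (1 : ℝ) ≤ 2 ^ k := one_le_pow₀ (by norm_num)
  have key : (A.card : ℝ) * (e ^ 2 / 4) ≤ e * (3 * 2 ^ n * NN (j + 2) / (q + 1)) := by
    refine hlow.trans ?_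
    rw [hvar]
    have : b * 2 ^ k * NN (j + 1) + NN j * ((b ^ 2 + 2 ^ n * b) / 2) - e ^ 2 * NN (j + 2) ≤
        e * (3 * 2 ^ n * NN (j + 2) / (q + 1)) := by
      rw [hN2, hN1, hn, hbe]
      have : e * (3 * (2 ^ k * q) * (NN j * (q + 2) / 2 * (q + 1)) / (q + 1)) =
        e * (3 * (2 ^ k * q) * (NN j * (q + 2) / 2)) := by field_simp
      rw [this]
      have t1 : 0 ≤ e * (2 ^ k : ℝ) * NN j := by positivity
      have t2 : 0 ≤ e ^ 2 * (NN j : ℝ) * (q + 1) := by positivity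
      have t3 : 0 ≤ e * (2 ^ k : ℝ) * NN j * ((q - 4) * q) :=
        mul_nonneg t1 (mul_nonneg (by linarith) (by linarith))
      have t4 : 0 ≤ e * (2 ^ k : ℝ) * NN j * (q - 4) := mul_nonneg t1 (by linarith)
      nlinarith
    linarith
  have key2 : (A.card : ℝ) * (e / 4) ≤ 3 * 2 ^ n * NN (j + 2) / (q + 1) := by
    apply le_of_mul_le_mul_left _ he1
    linarith
  rw [le_div_iff₀ hq1] at key2
  rw [hbe]
  linarith

end PvalAux

namespace PvalAux
variable {n : ℕ}

/-- Integer lift of the quadratic form. -/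
def qz (x : PV n) : ℤ := dotZ (liftZ x.1) (liftZ x.2)
/-- Integer lift of the pairing of second and first halves. -/
def sz (x y : PV n) : ℤ := dotZ (liftZ x.2) (liftZ y.1)

lemma cast_dotZ (a b : Fin n → F2) : ((dotZ (liftZ a) (liftZ b) : ℤ) : F2) = ∑ i, a i * b i := by
  simp [dotZ, liftZ]

/-- The pairing of second and first halves. -/
def sg (x y : PV n) : F2 := ∑ i, x.2 i * y.1 i

lemma cast_sz (x y : PV n) : ((sz x y : ℤ) : F2) = sg x y := cast_dotZ _ _
lemma cast_qz (x : PV n) : ((qz x : ℤ) : F2) = sg x x := by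
  rw [qz, cast_dotZ, sg]; exact Finset.sum_congr rfl fun i _ => mul_comm _ _

lemma sg_add_left (a b c : PV n) : sg (a + b) c = sg a c + sg b c := by
  simp [sg, add_mul, Finset.sum_add_distrib]
lemma sg_add_right (a b c : PV n) : sg a (b + c) = sg a b + sg a c := by
  simp [sg, mul_add, Finset.sum_add_distrib]
lemma symp_eq_sg (a b : PV n) : symp a b = sg a b + sg b a := by
  simp only [symp, sg]
  rw [add_comm]; congr 1; exact Finset.sum_congr rfl fun i _ => mul_comm _ _

lemma phase_eq (x y : PV n) : phase x y = Complex.I ^ (qz x + qz y - qz (x + y) + 2 * sz x y) := by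
  rw [zpow_add₀ Complex.I_ne_zero, sub_eq_add_neg, zpow_add₀ Complex.I_ne_zero,
    zpow_add₀ Complex.I_ne_zero, zpow_mul]
  have : Complex.I ^ (2 : ℤ) = -1 := by
    rw [← Complex.I_sq]; norm_cast
  rw [this]; rfl

lemma two_F2 : (2 : F2) = 0 := by decide

lemma wght_eq {x y : PV n} (h : symp x y = 0) : ∃ m : ℤ,
    qz x + qz y - qz (x + y) + 2 * sz x y = 2 * m ∧ wght x y = (m : F2) := by
  have h1 : (((qz x + qz y - qz (x + y) + 2 * sz x y : ℤ)) : F2) = 0 := by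
    push_cast
    rw [cast_qz, cast_qz, cast_qz, sg_add_left, sg_add_right, sg_add_right]
    rw [symp_eq_sg] at h
    linear_combination -h + (sz x y : F2) * two_F2
  rw [ZMod.intCast_zmod_eq_zero_iff_dvd] at h1
  obtain ⟨m, hm⟩ := h1
  refine ⟨m, by exact_mod_cast hm, ?_⟩
  have hI : Complex.I ^ (2 : ℤ) = -1 := by
    rw [← Complex.I_sq]; norm_cast
  have hp : phase x y = (-1) ^ m := by
    rw [phase_eq, hm]
    push_cast
    rw [zpow_mul, hI]
  unfold wght
  rcases Int.even_or_odd m with hm | hm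
  · rw [if_pos (by rw [hp, hm.neg_one_zpow])]
    obtain ⟨r, rfl⟩ := hm
    push_cast
    exact (CharTwo.add_self_eq_zero _).symm
  · rw [if_neg (by rw [hp, hm.neg_one_zpow]; norm_num)]
    obtain ⟨r, rfl⟩ := hm
    push_cast
    rw [two_F2]; ring

/-- A commuting independent pair on which `g` fails the outcome identity. -/
def Bad (g : PV n → F2) (x y : PV n) : Prop :=
  symp x y = 0 ∧ x ≠ 0 ∧ y ≠ 0 ∧ x ≠ y ∧ g (x + y) ≠ g x + g y + wght x y

/-- The magic square configurations. -/
def Sq (a b c d : PV n) : Prop :=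
  symp b c = 1 ∧ symp a b = 0 ∧ symp a c = 0 ∧ symp d b = 0 ∧ symp d c = 0 ∧ symp a d = 1

lemma bad_of {g : PV n → F2} {x y : PV n} (h : symp x y = 0) (u v : PV n) (h1 : symp x u = 1)
    (h2 : symp y u = 0) (h3 : symp y v = 1) (hb : ¬ Bad g x y) :
    g (x + y) = g x + g y + wght x y := by
  by_contra hne
  refine hb ⟨h, ?_, ?_, ?_, hne⟩
  · rintro rfl; rw [symp_zero_left] at h1; exact zero_ne_one h1
  · rintro rfl; rw [symp_zero_left] at h3; exact zero_ne_one h3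
  · rintro rfl; rw [h1] at h2; exact one_ne_zero h2

lemma mermin (g : PV n → F2) {a b c d : PV n} (h : Sq a b c d) :
    Bad g a b ∨ Bad g c d ∨ Bad g (a + c) (b + d) ∨ Bad g a c ∨ Bad g b d ∨
      Bad g (a + b) (c + d) := by
  obtain ⟨hbc, hab, hac, hdb, hdc, had⟩ := h
  have hcb := hbc; have hba := hab; have hca := hac; have hbd := hdb; have hcd := hdc
  have hda := had
  rw [symp_comm] at hcb hba hca hbd hcd hda
  by_contra! hcon
  obtain ⟨n1, n2, n3, n4, n5, n6⟩ := hcon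
  have h11 : (1 : F2) + 1 = 0 := by decide
  have e1 := bad_of hab d c had hbd hbc n1
  have e2 := bad_of hcd b a hcb hdb hda n2
  have s3 : symp (a + c) (b + d) = 0 := by simp [symp_add_left, symp_add_right, *]
  have e3 := bad_of s3 b a (by simp [symp_add_left, *])
    (by simp [symp_add_left, symp_self, *]) (by simp [symp_add_left, *]) n3
  have e4 := bad_of hac d b had hcd hcb n4
  have e5 := bad_of hbd c a hbc hdc hda n5
  have s6 : symp (a + b) (c + d) = 0 := by simp [symp_add_left, symp_add_right, *]
  have e6 := bad_of s6 c a (by simp [symp_add_left, *])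
    (by simp [symp_add_left, symp_self, *]) (by simp [symp_add_left, *]) n6
  obtain ⟨m1, p1, w1⟩ := wght_eq hab
  obtain ⟨m2, p2, w2⟩ := wght_eq hcd
  obtain ⟨m3, p3, w3⟩ := wght_eq s3
  obtain ⟨m4, p4, w4⟩ := wght_eq hac
  obtain ⟨m5, p5, w5⟩ := wght_eq hbd
  obtain ⟨m6, p6, w6⟩ := wght_eq s6
  have hs : a + b + (c + d) = a + c + (b + d) := by abel
  rw [hs] at p6 e6
  have hm : m1 + m2 + m3 + m4 + m5 + m6 = qz a + qz b + qz c + qz d - qz (a + c + (b + d)) +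
      (sz a b + sz c d + sz (a + c) (b + d) + sz a c + sz b d + sz (a + b) (c + d)) := by
    linarith
  have hm2 := congrArg (fun z : ℤ => (z : F2)) hm
  push_cast at hm2
  simp only [cast_qz, cast_sz, sg_add_left, sg_add_right] at hm2
  rw [← w1, ← w2, ← w3, ← w4, ← w5, ← w6] at hm2
  have hsum : wght a b + wght c d + wght (a + c) (b + d) + wght a c + wght b d +
      wght (a + b) (c + d) = 0 := by
    linear_combination -(e1 + e2 + e3 + e4 + e5 + e6) +
      (g (a + c + (b + d)) - g a - g b - g c - g d) * two_F2
  rw [symp_eq_sg] at hbc hab hac hdb hdc had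
  have : (1 : F2) = 0 := by
    linear_combination -(hsum - hm2 + hab + hac + had + hdb + hdc) +
      (sg a b + sg c d + sg a c + sg b d + sg a d) * two_F2
  exact one_ne_zero this

/-- Linear functional `symp a` cuts a submodule in half. -/
lemma card_half (W : Submodule F2 (PV n)) (a : PV n) [DecidablePred (· ∈ W)] (t : PV n)
    (ht : t ∈ W) (hat : symp a t = 1) :
    2 * (univ.filter fun x : PV n => x ∈ W ∧ symp a x = 1).card =
      (univ.filter fun x : PV n => x ∈ W).card := by
  have h1 : (univ.filter fun x : PV n => x ∈ W ∧ symp a x = 1).card =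
      (univ.filter fun x : PV n => x ∈ W ∧ ¬ symp a x = 1).card := by
    apply Finset.card_bij (fun x _ => x + t)
    · intro x hx
      simp only [mem_filter, mem_univ, true_and] at hx ⊢
      refine ⟨W.add_mem hx.1 ht, ?_⟩
      rw [symp_add_right, hx.2, hat]; decide
    · intro x _ y _ h
      exact add_right_cancel h
    · intro y hy
      simp only [mem_filter, mem_univ, true_and] at hy
      refine ⟨y + t, ?_, by rw [add_assoc, add_self_PV, add_zero]⟩
      simp only [mem_filter, mem_univ, true_and]
      refine ⟨W.add_mem hy.1 ht, ?_⟩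
      rw [symp_add_right, hat, (f2_cases _).resolve_right hy.2]; decide
  have h2 := Finset.card_filter_add_card_filter_not (s := univ.filter fun x : PV n => x ∈ W)
    (fun x => symp a x = 1)
  rw [Finset.filter_filter, Finset.filter_filter] at h2
  omega

open Classical in
/-- Count of the second half of a magic square. -/
lemma count_ad (hn : 3 ≤ n) {b c : PV n} (hbc : symp b c = 1) :
    2 ^ (4 * n) ≤ 64 * (univ.filter fun p : PV n × PV n => Sq p.1 b c p.2).card := by
  have hb : b ≠ 0 := by rintro rfl; rw [symp_zero_left] at hbc; exact zero_ne_one hbc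
  have hcb : c ∉ Submodule.span F2 {b} := by
    intro h
    rw [Submodule.mem_span_singleton] at h
    obtain ⟨r, rfl⟩ := h
    rw [symp_smul_right, symp_self, mul_zero] at hbc
    exact zero_ne_one hbc
  set U := Submodule.span F2 {b} ⊔ Submodule.span F2 {c} with hU
  have hUr : Module.finrank F2 U = 2 := by
    rw [hU, finrank_sup_span hcb, finrank_span_singleton hb]
  set W := (sform n).orthogonal U with hW
  have hWr : Module.finrank F2 W = 2 * n - 2 := by rw [hW, finrank_orth, hUr]
  have hWmem : ∀ x, x ∈ W ↔ symp x b = 0 ∧ symp x c = 0 := by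
    intro x
    rw [hW, mem_orth]
    constructor
    · intro h
      rw [symp_comm x b, symp_comm x c]
      exact ⟨h b (Submodule.mem_sup_left (Submodule.mem_span_singleton_self b)),
        h c (Submodule.mem_sup_right (Submodule.mem_span_singleton_self c))⟩
    · rintro ⟨h1, h2⟩ u hu
      rw [hU, Submodule.mem_sup] at hu
      obtain ⟨p, hp, q, hq, rfl⟩ := hu
      rw [Submodule.mem_span_singleton] at hp hq
      obtain ⟨r, rfl⟩ := hp
      obtain ⟨s, rfl⟩ := hq
      rw [symp_comm] at h1 h2
      simp [symp_add_left, symp_smul_left, h1, h2]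
  have hcW := card_filter_mem W
  rw [hWr] at hcW
  have hfib : ∀ a ∈ univ.filter (fun x : PV n => x ∈ W ∧ x ≠ 0),
      2 * (univ.filter fun d : PV n => d ∈ W ∧ symp a d = 1).card = 2 ^ (2 * n - 2) := by
    intro a ha
    simp only [mem_filter, mem_univ, true_and] at ha
    obtain ⟨ha1, ha2⟩ := (hWmem a).1 ha.1
    obtain ⟨t, ht⟩ := exists_symp_one ha.2
    rw [symp_comm] at ht
    rw [card_half W a (t + symp t c • b + symp t b • c), hcW]
    · rw [hWmem]
      have hcb := hbc
      rw [symp_comm] at hcb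
      simp only [symp_add_left, symp_smul_left, symp_self, hbc, hcb]
      constructor <;> ring_nf <;> rw [two_F2, mul_zero]
    · simp [symp_add_right, symp_smul_right, ha1, ha2, ht]
  have hcount : (univ.filter fun p : PV n × PV n => Sq p.1 b c p.2).card =
      ∑ a ∈ univ.filter (fun x : PV n => x ∈ W ∧ x ≠ 0),
        (univ.filter fun d : PV n => d ∈ W ∧ symp a d = 1).card := by
    rw [← Finset.card_sigma]
    apply Finset.card_bij (fun p _ => ⟨p.1, p.2⟩)
    · rintro ⟨a, d⟩ h
      simp only [mem_filter, mem_univ, true_and] at h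
      obtain ⟨_, h1, h2, h3, h4, h5⟩ := h
      simp only [mem_sigma, mem_filter, mem_univ, true_and]
      refine ⟨⟨(hWmem _).2 ⟨h1, h2⟩, ?_⟩, (hWmem _).2 ⟨h3, h4⟩, h5⟩
      rintro rfl; rw [symp_zero_left] at h5; exact zero_ne_one h5
    · rintro ⟨a, d⟩ _ ⟨a', d'⟩ _ h
      simpa using h
    · rintro ⟨a, d⟩ h
      simp only [mem_sigma, mem_filter, mem_univ, true_and] at h
      obtain ⟨⟨h1, _⟩, h3, h4⟩ := h
      refine ⟨(a, d), ?_, rfl⟩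
      simp only [mem_filter, mem_univ, true_and]
      exact ⟨hbc, ((hWmem _).1 h1).1, ((hWmem _).1 h1).2, ((hWmem _).1 h3).1,
        ((hWmem _).1 h3).2, h4⟩
  have hW0 : (univ.filter (fun x : PV n => x ∈ W ∧ x ≠ 0)).card + 1 = 2 ^ (2 * n - 2) := by
    rw [← hcW]
    have : (univ.filter (fun x : PV n => x ∈ W ∧ x ≠ 0)) =
        (univ.filter (fun x : PV n => x ∈ W)).erase 0 := by
      ext x; simp [and_comm]
    rw [this, Finset.card_erase_add_one]
    simp
  have h2 := Finset.sum_congr rfl hfib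
  rw [← Finset.mul_sum, ← hcount, sum_const, smul_eq_mul] at h2
  set w := 2 ^ (2 * n - 2) with hw
  have hw1 : 2 ^ (4 * n) = 16 * (w * w) := by
    rw [hw, ← pow_add, show (16 : ℕ) = 2 ^ 4 by norm_num, ← pow_add]; congr 1; omega
  have hw2 : 2 ≤ w := by
    rw [hw]
    calc 2 = 2 ^ 1 := rfl
      _ ≤ _ := Nat.pow_le_pow_right (by norm_num) (by omega)
  rw [hw1]
  nlinarith

open Classical in
/-- Count of anticommuting pairs. -/
lemma count_bc (hn : 3 ≤ n) :
    2 ^ (4 * n) ≤ 4 * (univ.filter fun p : PV n × PV n => symp p.1 p.2 = 1).card := by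
  have hfib : ∀ b ∈ univ.filter (fun x : PV n => x ≠ 0),
      2 * (univ.filter fun d : PV n => symp b d = 1).card = 2 ^ (2 * n) := by
    intro b hb
    simp only [mem_filter, mem_univ, true_and] at hb
    obtain ⟨t, ht⟩ := exists_symp_one hb
    rw [symp_comm] at ht
    have := card_half ⊤ b t trivial ht
    simpa [card_PV, -Fintype.card_prod] using this
  have hcount : (univ.filter fun p : PV n × PV n => symp p.1 p.2 = 1).card =
      ∑ b ∈ univ.filter (fun x : PV n => x ≠ 0),
        (univ.filter fun d : PV n => symp b d = 1).card := by
    rw [← Finset.card_sigma]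
    apply Finset.card_bij (fun p _ => ⟨p.1, p.2⟩)
    · rintro ⟨a, d⟩ h
      simp only [mem_filter, mem_univ, true_and] at h
      simp only [mem_sigma, mem_filter, mem_univ, true_and]
      refine ⟨?_, h⟩
      rintro rfl; rw [symp_zero_left] at h; exact zero_ne_one h
    · rintro ⟨a, d⟩ _ ⟨a', d'⟩ _ h
      simpa using h
    · rintro ⟨a, d⟩ h
      simp only [mem_sigma, mem_filter, mem_univ, true_and] at h
      refine ⟨(a, d), ?_, rfl⟩
      simp only [mem_filter, mem_univ, true_and]
      exact h.2
  have hW0 : (univ.filter (fun x : PV n => x ≠ 0)).card + 1 = 2 ^ (2 * n) := by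
    rw [← card_PV, Finset.filter_ne' univ (0 : PV n), Finset.card_erase_add_one (mem_univ _)]
    rfl
  have h2 := Finset.sum_congr rfl hfib
  rw [← Finset.mul_sum, ← hcount, sum_const, smul_eq_mul] at h2
  set w := 2 ^ (2 * n) with hw
  have hw1 : 2 ^ (4 * n) = w * w := by
    rw [hw, ← pow_add]; congr 1; omega
  have hw2 : 2 ≤ w := by
    rw [hw]
    calc 2 = 2 ^ 1 := rfl
      _ ≤ _ := Nat.pow_le_pow_right (by norm_num) (by omega)
  rw [hw1]
  nlinarith

open Classical in
lemma count_sq (hn : 3 ≤ n) :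
    2 ^ (8 * n) ≤ 256 * (univ.filter fun p : (PV n × PV n) × (PV n × PV n) =>
      Sq p.2.1 p.1.1 p.1.2 p.2.2).card := by
  have hcount : (univ.filter fun p : (PV n × PV n) × (PV n × PV n) =>
      Sq p.2.1 p.1.1 p.1.2 p.2.2).card =
      ∑ b ∈ univ.filter (fun p : PV n × PV n => symp p.1 p.2 = 1),
        (univ.filter fun p : PV n × PV n => Sq p.1 b.1 b.2 p.2).card := by
    rw [← Finset.card_sigma]
    apply Finset.card_bij (fun p _ => ⟨p.1, p.2⟩)
    · rintro ⟨a, d⟩ h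
      simp only [mem_filter, mem_univ, true_and] at h
      simp only [mem_sigma, mem_filter, mem_univ, true_and]
      exact ⟨h.1, h⟩
    · rintro ⟨a, d⟩ _ ⟨a', d'⟩ _ h
      simpa using h
    · rintro ⟨a, d⟩ h
      simp only [mem_sigma, mem_filter, mem_univ, true_and] at h
      refine ⟨(a, d), ?_, rfl⟩
      simp only [mem_filter, mem_univ, true_and]
      exact h.2
  have h1 := count_bc hn
  have h2 : (univ.filter (fun p : PV n × PV n => symp p.1 p.2 = 1)).card * 2 ^ (4 * n) ≤
      64 * ∑ b ∈ univ.filter (fun p : PV n × PV n => symp p.1 p.2 = 1),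
        (univ.filter fun p : PV n × PV n => Sq p.1 b.1 b.2 p.2).card := by
    rw [Finset.mul_sum, ← smul_eq_mul, ← Finset.sum_const]
    apply Finset.sum_le_sum
    intro b hb
    exact count_ad hn (by simpa using hb)
  rw [← hcount] at h2
  have : 2 ^ (8 * n) = 2 ^ (4 * n) * 2 ^ (4 * n) := by rw [← pow_add]; congr 1; omega
  rw [this]
  nlinarith [Nat.zero_le (2 ^ (4 * n))]

open Classical in
lemma fib_bound (P : PV n × PV n → Prop) (T : Finset ((PV n × PV n) × (PV n × PV n)))
    (φ : (PV n × PV n) × (PV n × PV n) → (PV n × PV n) × (PV n × PV n))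
    (hφ : Function.Injective φ) (hT : ∀ p ∈ T, P (φ p).1) :
    T.card ≤ (univ.filter P).card * 2 ^ (4 * n) := by
  have : (univ : Finset (PV n × PV n)).card = 2 ^ (4 * n) := by
    rw [card_univ, Fintype.card_prod, card_PV, ← pow_add]; congr 1; omega
  rw [← this, ← Finset.card_product]
  apply Finset.card_le_card_of_injOn φ
  · intro p hp
    simpa using hT p hp
  · exact hφ.injOn

open Classical in
lemma count_bad (hn : 3 ≤ n) (g : PV n → F2) :
    2 ^ (4 * n) ≤ 2048 * (univ.filter fun p : PV n × PV n => Bad g p.1 p.2).card := by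
  set T : Finset ((PV n × PV n) × (PV n × PV n)) := univ.filter fun p =>
      Sq p.2.1 p.1.1 p.1.2 p.2.2 with hT
  set N := (univ.filter fun p : PV n × PV n => Bad g p.1 p.2).card with hN
  -- the six lines of the square
  let φ : Fin 6 → (PV n × PV n) × (PV n × PV n) → (PV n × PV n) × (PV n × PV n) := fun i p =>
    match i with
    | 0 => ((p.2.1, p.1.1), (p.1.2, p.2.2))
    | 1 => ((p.1.2, p.2.2), (p.2.1, p.1.1))
    | 2 => ((p.2.1 + p.1.2, p.1.1 + p.2.2), (p.2.1, p.1.1))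
    | 3 => ((p.2.1, p.1.2), (p.1.1, p.2.2))
    | 4 => ((p.1.1, p.2.2), (p.2.1, p.1.2))
    | 5 => ((p.2.1 + p.1.1, p.1.2 + p.2.2), (p.2.1, p.1.2))
  have hinj : ∀ i, Function.Injective (φ i) := by
    intro i
    rintro ⟨⟨b, c⟩, a, d⟩ ⟨⟨b', c'⟩, a', d'⟩ h
    fin_cases i <;> simp only [φ, Prod.mk.injEq] at h ⊢ <;>
      obtain ⟨⟨h1, h2⟩, h3, h4⟩ := h <;> subst h3 <;> subst h4 <;> simp_all
  have hcov : T ⊆ univ.biUnion fun i : Fin 6 => T.filter fun p => Bad g (φ i p).1.1 (φ i p).1.2 := by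
    intro p hp
    have hs : Sq p.2.1 p.1.1 p.1.2 p.2.2 := by simpa [hT] using hp
    simp only [mem_biUnion, mem_univ, true_and, mem_filter]
    rcases mermin g hs with h | h | h | h | h | h
    · exact ⟨0, hp, h⟩
    · exact ⟨1, hp, h⟩
    · exact ⟨2, hp, h⟩
    · exact ⟨3, hp, h⟩
    · exact ⟨4, hp, h⟩
    · exact ⟨5, hp, h⟩
  have h1 : T.card ≤ 6 * (N * 2 ^ (4 * n)) := by
    calc T.card ≤ _ := Finset.card_le_card hcov
      _ ≤ ∑ i : Fin 6, (T.filter fun p => Bad g (φ i p).1.1 (φ i p).1.2).card :=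
        Finset.card_biUnion_le
      _ ≤ ∑ i : Fin 6, N * 2 ^ (4 * n) := by
        apply Finset.sum_le_sum
        intro i _
        exact fib_bound (fun p => Bad g p.1 p.2) _ (φ i) (hinj i) fun p hp => (mem_filter.1 hp).2
      _ = _ := by simp
  have h2 := count_sq (n := n) hn
  rw [← hT] at h2
  have h3 : 2 ^ (8 * n) = 2 ^ (4 * n) * 2 ^ (4 * n) := by rw [← pow_add]; congr 1; omega
  rw [h3] at h2
  have h4 : 0 < 2 ^ (4 * n) := by positivity
  apply Nat.le_of_mul_le_mul_left _ h4
  nlinarith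

end PvalAux

namespace PvalAux
variable {n : ℕ}

open Classical in
lemma main_bound (m : ℕ) (hn : n = m + 3) (D : Finset (Submodule F2 (PV n)))
    (hD : ∀ S ∈ D, S ∈ Lset n n) (g : PV n → F2)
    (hg : ∀ S ∈ D, ∀ x ∈ S, ∀ y ∈ S, g (x + y) = g x + g y + wght x y) :
    (D.card : ℝ) * 2 ^ n ≤ 147456 * NN n := by
  set Q : ℝ := 2 ^ (2 * n) with hQ
  have hQn : Q = 2 ^ n * 2 ^ n := by rw [hQ, ← pow_add]; congr 1; omega
  have hn0 : (0 : ℝ) < 2 ^ n := by positivity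
  have hQ0 : 0 < Q := by positivity
  set Bx : PV n → Finset (PV n) := fun x => univ.filter fun y => Bad g x y with hBx
  set G : Finset (PV n) := univ.filter fun x => Q ≤ 4096 * (Bx x).card with hG
  have hcardV : ((univ : Finset (PV n)).card : ℝ) = Q := by
    rw [card_univ, card_PV, hQ]; push_cast; rfl
  -- many bad pairs
  have hbad : Q * Q ≤ 2048 * ∑ x : PV n, ((Bx x).card : ℝ) := by
    have h := count_bad (n := n) (by omega) g
    have h1 : (univ.filter fun p : PV n × PV n => Bad g p.1 p.2).card =
        ∑ x : PV n, (Bx x).card := by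
      rw [Finset.card_filter, Fintype.sum_prod_type]
      exact Finset.sum_congr rfl fun x _ => (Finset.card_filter _ _).symm
    rw [h1] at h
    have h2 : Q * Q = 2 ^ (4 * n) := by rw [hQ, ← pow_add]; congr 1; omega
    rw [h2]
    exact_mod_cast h
  have hGcard : Q ≤ 4096 * (G.card : ℝ) := by
    have h1 : ∑ x : PV n, ((Bx x).card : ℝ) ≤
        ∑ x : PV n, ((if x ∈ G then Q else 0) + Q / 4096) := by
      apply Finset.sum_le_sum
      intro x _
      by_cases hx : x ∈ G
      · rw [if_pos hx]
        have : ((Bx x).card : ℝ) ≤ Q := by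
          rw [← hcardV]; exact_mod_cast Finset.card_le_card (subset_univ _)
        linarith
      · rw [if_neg hx]
        have : ¬ Q ≤ 4096 * ((Bx x).card : ℝ) := by simpa [hG] using hx
        linarith
    rw [Finset.sum_add_distrib, sum_const, nsmul_eq_mul, hcardV, ← Finset.sum_filter,
      Finset.filter_univ_mem, sum_const, nsmul_eq_mul] at h1
    have : Q * Q ≤ Q * (4096 * (G.card : ℝ)) := by linarith
    exact le_of_mul_le_mul_left this hQ0
  have hG0 : ∀ x ∈ G, x ≠ 0 := by
    rintro x hx rfl
    have : Q ≤ 4096 * ((Bx 0).card : ℝ) := by simpa [hG] using hx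
    have h0 : Bx 0 = ∅ := by
      apply Finset.filter_eq_empty_iff.2
      rintro y _ ⟨_, h, _⟩
      exact h rfl
    rw [h0] at this
    simp at this
    linarith
  -- links
  have hlink : ∀ x ∈ G, ((D.filter fun S => x ∈ S).card : ℝ) * 2 ^ n ≤ 49152 * NN (m + 2) := by
    intro x hx
    have hx0 := hG0 x hx
    have hxG : Q ≤ 4096 * ((Bx x).card : ℝ) := by simpa [hG] using hx
    have hiso : IsIsotropic (Submodule.span F2 {x}) := by
      intro a ha b hb
      rw [Submodule.mem_span_singleton] at ha hb
      obtain ⟨r, rfl⟩ := ha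
      obtain ⟨s, rfl⟩ := hb
      simp [symp_smul_left, symp_smul_right, symp_self]
    have h := chebyshev (Submodule.span F2 {x}) hiso m
      (by rw [finrank_span_singleton hx0]; omega) (Bx x) ?_ (D.filter fun S => x ∈ S) ?_ ?_
    · have h1 : ((D.filter fun S => x ∈ S).card : ℝ) * Q ≤
          ((D.filter fun S => x ∈ S).card : ℝ) * (4096 * ((Bx x).card : ℝ)) :=
        mul_le_mul_of_nonneg_left hxG (by positivity)
      rw [hQn] at h1
      apply le_of_mul_le_mul_left _ hn0
      linarith
    · intro y hy
      obtain ⟨h1, h2, h3, h4, _⟩ : Bad g x y := by simpa [hBx] using hy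
      constructor
      · intro u hu
        rw [Submodule.mem_span_singleton] at hu
        obtain ⟨r, rfl⟩ := hu
        rw [symp_smul_left, h1, mul_zero]
      · intro hu
        rw [Submodule.mem_span_singleton] at hu
        obtain ⟨r, rfl⟩ := hu
        rcases f2_cases r with rfl | rfl
        · exact h3 (zero_smul _ _)
        · exact h4 (one_smul _ _).symm
    · intro S hS
      rw [mem_filter] at hS
      rw [mem_LU]
      refine ⟨hD S hS.1, ?_⟩
      rw [Submodule.span_singleton_le_iff_mem]
      exact hS.2
    · intro S hS
      rw [mem_filter] at hS
      have : (Bx x).filter (fun y => y ∈ S) = ∅ := by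
        apply Finset.filter_eq_empty_iff.2
        intro y hy hyS
        obtain ⟨_, _, _, _, h5⟩ : Bad g x y := by simpa [hBx] using hy
        exact h5 (hg S hS.1 x hS.2 y hyS)
      rw [this]
      simp
  -- exceptional set
  set A : Finset (Submodule F2 (PV n)) := D.filter fun S =>
    2 * ((G.filter (fun x => x ∈ S)).card : ℝ) * (2 ^ (m + 1 + 2) + 1) ≤ G.card with hA
  have hAc : (A.card : ℝ) * 2 ^ n ≤ 49152 * NN n := by
    have h := chebyshev (⊥ : Submodule F2 (PV n))
      (by intro a ha b _; rw [Submodule.mem_bot] at ha; rw [ha, symp_zero_left]) (m + 1)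
      (by rw [finrank_bot]; omega) G ?_ A ?_ ?_
    · have h1 : (A.card : ℝ) * Q ≤ (A.card : ℝ) * (4096 * (G.card : ℝ)) :=
        mul_le_mul_of_nonneg_left hGcard (by positivity)
      rw [hQn] at h1
      rw [show m + 1 + 2 = n by omega] at h
      apply le_of_mul_le_mul_left _ hn0
      linarith
    · intro x hx
      refine ⟨?_, by rw [Submodule.mem_bot]; exact hG0 x hx⟩
      intro u hu
      rw [Submodule.mem_bot] at hu
      rw [hu, symp_zero_left]
    · intro S hS
      rw [hA, mem_filter] at hS
      rw [mem_LU]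
      exact ⟨hD S hS.1, bot_le⟩
    · intro S hS
      rw [hA, mem_filter] at hS
      exact hS.2
  have hrest : ((D \ A).card : ℝ) * 2 ^ n ≤ 98304 * NN n := by
    have hGpos : (0 : ℝ) < G.card := by linarith
    have hp0 : (0 : ℝ) < 2 ^ n + 1 := by linarith
    have hNN : (NN n : ℝ) = NN (m + 2) * (2 ^ n + 1) := by
      rw [hn, NN_succ]; push_cast; rfl
    have h1 : ((D \ A).card : ℝ) * G.card ≤
        2 * (2 ^ n + 1) * ∑ S ∈ D, ((G.filter (fun x => x ∈ S)).card : ℝ) := by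
      calc ((D \ A).card : ℝ) * G.card = ∑ S ∈ D \ A, (G.card : ℝ) := by simp
        _ ≤ ∑ S ∈ D \ A, 2 * (2 ^ n + 1) * ((G.filter (fun x => x ∈ S)).card : ℝ) := by
          apply Finset.sum_le_sum
          intro S hS
          rw [mem_sdiff, hA, mem_filter, not_and] at hS
          have := hS.2 hS.1
          rw [show m + 1 + 2 = n by omega] at this
          linarith
        _ ≤ ∑ S ∈ D, 2 * (2 ^ n + 1) * ((G.filter (fun x => x ∈ S)).card : ℝ) :=
          Finset.sum_le_sum_of_subset_of_nonneg sdiff_subset fun _ _ _ => by positivity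
        _ = _ := by rw [Finset.mul_sum]
    have hdc : ∑ S ∈ D, ((G.filter (fun x => x ∈ S)).card : ℝ) =
        ∑ x ∈ G, ((D.filter fun S => x ∈ S).card : ℝ) := by
      exact_mod_cast Finset.sum_card_bipartiteAbove_eq_sum_card_bipartiteBelow
        (s := D) (t := G) (fun S x => x ∈ S)
    have h2 : (∑ x ∈ G, ((D.filter fun S => x ∈ S).card : ℝ)) * 2 ^ n ≤
        G.card * (49152 * NN (m + 2)) := by
      rw [Finset.sum_mul]
      refine (Finset.sum_le_sum hlink).trans (le_of_eq ?_)
      rw [sum_const, nsmul_eq_mul]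
    rw [hdc] at h1
    apply le_of_mul_le_mul_left _ hGpos
    calc (G.card : ℝ) * (((D \ A).card : ℝ) * 2 ^ n) =
          (((D \ A).card : ℝ) * G.card) * 2 ^ n := by ring
      _ ≤ (2 * (2 ^ n + 1) * ∑ x ∈ G, ((D.filter fun S => x ∈ S).card : ℝ)) * 2 ^ n :=
        mul_le_mul_of_nonneg_right h1 hn0.le
      _ = 2 * (2 ^ n + 1) * ((∑ x ∈ G, ((D.filter fun S => x ∈ S).card : ℝ)) * 2 ^ n) := by ring
      _ ≤ 2 * (2 ^ n + 1) * (G.card * (49152 * NN (m + 2))) :=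
        mul_le_mul_of_nonneg_left h2 (by positivity)
      _ = _ := by rw [hNN]; ring
  have hsum : ((D \ A).card : ℝ) + A.card = D.card := by
    exact_mod_cast Finset.card_sdiff_add_card_eq_card (filter_subset _ _)
  rw [← hsum]
  linarith

end PvalAux

theorem pval_le_exp_decay :
    ∃ C : ℝ, 0 < C ∧ ∀ n : ℕ, 2 ≤ n →
      ∀ D ⊆ Lset n n,
        (∃ f : (S : Submodule F2 (PV n)) → (S → F2),
            (∀ S ∈ D, IsOutcome S (f S)) ∧
            (∀ S₁ ∈ D, ∀ S₂ ∈ D, ConsistentOn (f S₁) (f S₂))) →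
        (Nat.card D : ℝ) / (Nat.card (Lset n n) : ℝ) ≤ C * (2 : ℝ) ^ (-(n : ℤ)) := by
  classical
  refine ⟨147456, by norm_num, ?_⟩
  rintro n hn D hD ⟨f, hf, hcons⟩
  rcases hn.eq_or_lt with h2 | h3
  · subst h2
    have h1 : (Nat.card D : ℝ) / (Nat.card (Lset 2 2) : ℝ) ≤ 1 := by
      apply div_le_one_of_le₀ _ (by positivity)
      exact_mod_cast Nat.card_mono (Set.toFinite _) hD
    refine h1.trans ?_
    norm_num
  · obtain ⟨m, rfl⟩ : ∃ m, n = m + 3 := ⟨n - 3, by omega⟩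
    set g : PV (m + 3) → F2 := fun v =>
      if h : ∃ S, S ∈ D ∧ v ∈ S then f h.choose ⟨v, h.choose_spec.2⟩ else 0 with hgdef
    have hgf : ∀ S ∈ D, ∀ v (hv : v ∈ S), g v = f S ⟨v, hv⟩ := by
      intro S hS v hv
      have h : ∃ S, S ∈ D ∧ v ∈ S := ⟨S, hS, hv⟩
      simp only [hgdef]
      rw [dif_pos h]
      exact hcons _ h.choose_spec.1 S hS v _ hv
    have hmain := PvalAux.main_bound m rfl D.toFinset
      (fun S hS => hD (Set.mem_toFinset.1 hS)) g (by
        intro S hS x hx y hy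
        rw [Set.mem_toFinset] at hS
        rw [hgf S hS x hx, hgf S hS y hy, hgf S hS (x + y) (S.add_mem hx hy)]
        exact hf S hS ⟨x, hx⟩ ⟨y, hy⟩)
    have hcD : Nat.card D = D.toFinset.card := by
      rw [Nat.card_eq_fintype_card, Set.toFinset_card]
    have hcL : Nat.card (Lset (m + 3) (m + 3)) = PvalAux.NN (m + 3) := by
      rw [← PvalAux.card_LU (n := m + 3) (m + 3) ⊥
        (by intro a ha b _; rw [Submodule.mem_bot] at ha; rw [ha, PvalAux.symp_zero_left])
        (by rw [finrank_bot]; omega), Nat.card_eq_fintype_card, ← Set.toFinset_card]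
      congr 1
      ext S
      simp [PvalAux.mem_LU]
    have hN0 : (0 : ℝ) < PvalAux.NN (m + 3) := by exact_mod_cast PvalAux.NN_pos _
    rw [hcD, hcL, div_le_iff₀ hN0, zpow_neg, zpow_natCast]
    have hp : (0 : ℝ) < 2 ^ (m + 3) := by positivity
    apply le_of_mul_le_mul_right _ hp
    refine hmain.trans (le_of_eq ?_)
    field_simp
end

section
/- There exists ε ∈ (0,1) such that for every even n ≥ 2, Cval(L^n) ≥ 1/4 − ε^n. That is, for every contextual hidden variable assignment f on the maximal isotropic subspaces of (ZMod 2)^{2n}, the average over one-dimensional isotropic subspaces w of m_w(f)(1 − m_w(f)) is at least 1/4 − ε^n. -/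
open Finset

/-- Given a contextual hidden variable assignment `f`, a 1-dimensional isotropic `w`, and a
value `c : F2`, the number of maximal isotropic subspaces `x ⊇ w` whose assigned outcome gives
the nonzero vector of `w` the value `c`. -/
noncomputable def outcomeCount (n : ℕ) (f : (S : Submodule F2 (PV n)) → (S → F2))
    (w : Submodule F2 (PV n)) (c : F2) : ℕ :=
  Nat.card {x : Submodule F2 (PV n) |
    x ∈ Lset n n ∧ ∃ (h : w ≤ x), ∃ v, ∃ (hv : v ∈ w), v ≠ 0 ∧ f x ⟨v, h hv⟩ = c}

/-- `m_w(f)`: the fraction of maximal isotropic subspaces above `w` assigning the minority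
value to the nonzero vector of `w`. -/
noncomputable def minorityFrac (n : ℕ) (f : (S : Submodule F2 (PV n)) → (S → F2))
    (w : Submodule F2 (PV n)) : ℝ :=
  (min (outcomeCount n f w 0) (outcomeCount n f w 1) : ℝ) /
    ((outcomeCount n f w 0 : ℝ) + (outcomeCount n f w 1 : ℝ))


/-- the sign of an element of `F2` -/
def sg (c : F2) : ℝ := if c = 0 then 1 else -1

lemma sg_add (a b : F2) : sg (a + b) = sg a * sg b := by
  have h : ∀ a b : F2, (a + b = 0 ↔ (a = b)) ∧ (a = 0 ∨ a = 1) := by decide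
  have ha := (h a b).2
  have hb := (h b a).2
  have h11 : (1 : F2) + 1 = 0 := by decide
  rcases ha with rfl | rfl <;> rcases hb with rfl | rfl <;> simp [sg, h11]

lemma sg_zero : sg 0 = 1 := by simp [sg]

lemma sg_mul_self (a : F2) : sg a * sg a = 1 := by
  unfold sg; split_ifs <;> norm_num

lemma abs_sg (a : F2) : |sg a| = 1 := by
  unfold sg; split_ifs <;> norm_num

lemma F2_add_self (a : F2) : a + a = 0 := by revert a; decide

lemma PV_add_self {n : ℕ} (a : PV n) : a + a = 0 := by
  ext i <;> simp [F2_add_self]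

lemma vec_add_self {n : ℕ} (a : Fin n → F2) : a + a = 0 := by
  ext i; simp [F2_add_self]

lemma neg_one_zpow_eq (k : ℤ) : (-1 : ℂ) ^ k = (sg ((k : ℤ) : F2) : ℂ) := by
  rcases Int.even_or_odd k with h | h
  · have : ((k : ℤ) : F2) = 0 := (ZMod.intCast_zmod_eq_zero_iff_dvd k 2).2 (by exact_mod_cast h.two_dvd)
    rw [h.neg_one_zpow, this, sg_zero]; simp
  · have : ((k : ℤ) : F2) ≠ 0 := by
      intro h2
      have := (ZMod.intCast_zmod_eq_zero_iff_dvd k 2).1 h2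
      rw [← Int.not_even_iff_odd] at h
      exact h (even_iff_two_dvd.2 (by exact_mod_cast this))
    rw [h.neg_one_zpow]; simp [sg, this]

lemma cast_dotZ {n : ℕ} (a b : Fin n → F2) :
    ((dotZ (liftZ a) (liftZ b) : ℤ) : F2) = ∑ i, a i * b i := by
  simp [dotZ, liftZ]

lemma symp_comm {n : ℕ} (a b : PV n) : symp a b = symp b a := by
  unfold symp
  rw [add_comm]
  simp only [mul_comm]

lemma symp_add_left {n : ℕ} (a b c : PV n) : symp (a + b) c = symp a c + symp b c := by
  simp only [symp, Prod.fst_add, Prod.snd_add, Pi.add_apply, add_mul, Finset.sum_add_distrib]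
  ring

lemma symp_add_right {n : ℕ} (a b c : PV n) : symp a (b + c) = symp a b + symp a c := by
  rw [symp_comm, symp_add_left, symp_comm b, symp_comm c]

lemma symp_self {n : ℕ} (a : PV n) : symp a a = 0 := by
  unfold symp
  simp only [mul_comm]
  exact F2_add_self _

lemma symp_smul_left {n : ℕ} (r : F2) (a c : PV n) : symp (r • a) c = r * symp a c := by
  simp only [symp, Prod.smul_fst, Prod.smul_snd, Pi.smul_apply, smul_eq_mul, mul_add,
    Finset.mul_sum, mul_assoc]

lemma phase_sq {n : ℕ} (x y : PV n) : phase x y ^ 2 = (sg (symp x y) : ℂ) := by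
  have hI : ∀ k : ℤ, (Complex.I ^ k) ^ 2 = (sg ((k : ℤ) : F2) : ℂ) := by
    intro k
    rw [← neg_one_zpow_eq, ← Complex.I_sq, ← zpow_natCast, ← zpow_natCast, ← zpow_mul, ← zpow_mul,
      mul_comm]
  unfold phase
  rw [mul_pow, mul_pow, mul_pow, hI, hI, hI, neg_one_zpow_eq, Int.cast_neg, cast_dotZ, cast_dotZ,
    cast_dotZ]
  rw [pow_two ((sg _ : ℝ) : ℂ), ← Complex.ofReal_mul, ← Complex.ofReal_mul, ← Complex.ofReal_mul,
    sg_mul_self, ← Complex.ofReal_mul, ← sg_add, ← sg_add, mul_one]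
  congr 2
  have hneg : ∀ a : F2, -a = a := by decide
  rw [hneg]
  simp only [symp, Prod.fst_add, Prod.snd_add, Pi.add_apply, ← Finset.sum_add_distrib]
  refine Finset.sum_congr rfl fun i _ => ?_
  generalize x.1 i = a
  generalize x.2 i = b
  generalize y.1 i = c
  generalize y.2 i = d
  revert a b c d; decide

lemma phase_re {n : ℕ} (x y : PV n) :
    (phase x y).re = if symp x y = 0 then sg (wght x y) else 0 := by
  have h := phase_sq x y
  by_cases hs : symp x y = 0
  · rw [if_pos hs]
    rw [hs, sg_zero] at h
    unfold wght
    have h' : phase x y = 1 ∨ phase x y = -1 := by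
      apply sq_eq_sq_iff_eq_or_eq_neg.1; rw [h]; simp
    rcases h' with h' | h'
    · simp [h', sg]
    · have : (-1 : ℂ) ≠ 1 := by norm_num
      simp [h', sg, this]
  · rw [if_neg hs]
    have h2 : phase x y ^ 2 = -1 := by rw [h]; simp [sg, hs]
    have h' : phase x y = Complex.I ∨ phase x y = -Complex.I := by
      apply sq_eq_sq_iff_eq_or_eq_neg.1; rw [h2, Complex.I_sq]
    rcases h' with h' | h' <;> simp [h']

/-- Pauli matrices -/
noncomputable def TT {n : ℕ} (v : PV n) (p q : Fin n → F2) : ℂ :=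
  if p = q + v.1 then
    Complex.I ^ (dotZ (liftZ v.1) (liftZ v.2)) * (sg (∑ i, v.2 i * q i) : ℂ) else 0

lemma TT_mul {n : ℕ} (x y : PV n) (p r : Fin n → F2) :
    ∑ q, TT x p q * TT y q r = phase x y * TT (x + y) p r := by
  rw [Finset.sum_eq_single (r + y.1)]
  · unfold TT
    have : (r + y.1 + x.1) = r + (x + y).1 := by simp [add_assoc, add_comm y.1]
    rw [this]
    by_cases hp : p = r + (x + y).1
    · simp only [if_pos hp, if_true]
      unfold phase
      rw [neg_one_zpow_eq, cast_dotZ, zpow_neg]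
      have hne : Complex.I ^ (dotZ (liftZ (x + y).1) (liftZ (x + y).2)) ≠ 0 :=
        zpow_ne_zero _ Complex.I_ne_zero
      field_simp
      rw [← Complex.ofReal_mul, ← Complex.ofReal_mul, ← sg_add, ← sg_add]
      congr 2
      simp only [← Finset.sum_add_distrib]
      refine Finset.sum_congr rfl fun i _ => ?_
      simp
      ring
    · simp only [if_neg hp, zero_mul, mul_zero]
  · intro q _ hq
    simp [TT, hq]
  · simp

lemma sum_sg_zero {A : Type*} [Fintype A] [AddCommGroup A] (g : A → F2)
    (hg : ∀ a b, g (a + b) = g a + g b) (a₀ : A) (h : g a₀ ≠ 0) : ∑ a, sg (g a) = 0 := by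
  have h1 : ∑ a, sg (g a) = ∑ a, sg (g (a + a₀)) :=
    (Equiv.sum_comp (Equiv.addRight a₀) (fun a => sg (g a))).symm
  simp only [hg, sg_add, ← Finset.sum_mul] at h1
  have : sg (g a₀) = -1 := by simp [sg, h]
  rw [this] at h1
  linarith

lemma parseval {I J : Type*} [Fintype I] [Fintype J] [DecidableEq I] (K : I → J → ℂ) (M : ℝ)
    (hK : ∀ i i', ∑ j, K i j * (starRingEnd ℂ) (K i' j) = if i = i' then (M : ℂ) else 0)
    (c : I → ℂ) : ∑ j, ‖∑ i, c i * K i j‖ ^ 2 = M * ∑ i, ‖c i‖ ^ 2 := by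
  have h : ((∑ j, ‖∑ i, c i * K i j‖ ^ 2 : ℝ) : ℂ) = ((M * ∑ i, ‖c i‖ ^ 2 : ℝ) : ℂ) := by
    push_cast
    simp only [← Complex.mul_conj', map_sum, map_mul, Finset.sum_mul_sum]
    rw [Finset.sum_comm, Finset.mul_sum]
    refine Finset.sum_congr rfl fun i _ => ?_
    rw [Finset.sum_comm]
    have : ∀ i', ∑ j, c i * K i j * ((starRingEnd ℂ) (c i') * (starRingEnd ℂ) (K i' j)) =
        c i * (starRingEnd ℂ) (c i') * (if i = i' then (M : ℂ) else 0) := by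
      intro i'
      rw [← hK, Finset.mul_sum]
      refine Finset.sum_congr rfl fun j _ => ?_
      ring
    simp only [this]
    simp
    ring
  exact_mod_cast h

lemma TT_orth {n : ℕ} (v w : PV n) :
    ∑ j : (Fin n → F2) × (Fin n → F2), TT v j.1 j.2 * (starRingEnd ℂ) (TT w j.1 j.2) =
      if v = w then (((2 : ℝ) ^ n : ℝ) : ℂ) else 0 := by
  rw [Fintype.sum_prod_type_right]
  by_cases h1 : v.1 = w.1
  · have h : ∀ q, ∑ p, TT v p q * (starRingEnd ℂ) (TT w p q) =
      Complex.I ^ (dotZ (liftZ v.1) (liftZ v.2)) *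
      (starRingEnd ℂ) (Complex.I ^ (dotZ (liftZ w.1) (liftZ w.2))) *
      (sg (∑ i, (v.2 i + w.2 i) * q i) : ℂ) := by
      intro q
      simp only [TT]
      rw [Finset.sum_eq_single (q + v.1)]
      · simp only [h1, if_true, map_mul, Complex.conj_ofReal, add_mul, Finset.sum_add_distrib,
          sg_add, Complex.ofReal_mul]
        ring
      · intro p _ hp
        simp [hp]
      · simp
    simp only [h, ← Finset.mul_sum]
    by_cases h2 : v.2 = w.2
    · have hvw : v = w := Prod.ext h1 h2
      subst hvw
      simp only [F2_add_self, zero_mul, Finset.sum_const_zero, sg_zero, if_true]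
      rw [Complex.mul_conj', norm_zpow]
      simp
    · rw [if_neg (fun h => h2 (by rw [h]))]
      obtain ⟨i, hi⟩ := Function.ne_iff.1 h2
      rw [← Complex.ofReal_sum, sum_sg_zero (fun q : Fin n → F2 => ∑ i, (v.2 i + w.2 i) * q i) _
        (Pi.single i 1)]
      · simp
      · simp only [Pi.single_apply, mul_ite, mul_one, mul_zero, Finset.sum_ite_eq',
          Finset.mem_univ, if_true]
        revert hi
        generalize v.2 i = a
        generalize w.2 i = b
        revert a b; decide
      · intro a b
        simp [mul_add, Finset.sum_add_distrib]
  · rw [if_neg (fun h => h1 (by rw [h]))]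
    refine Finset.sum_eq_zero fun q _ => Finset.sum_eq_zero fun p _ => ?_
    simp only [TT]
    by_cases hp : p = q + v.1
    · have : p ≠ q + w.1 := by
        rw [hp]; simpa using h1
      simp [this]
    · simp [hp]

lemma exists_symp_ne {n : ℕ} (v : PV n) (hv : v ≠ 0) : ∃ a, symp a v ≠ 0 := by
  by_contra hcon
  push Not at hcon
  apply hv
  ext i
  · have := hcon (0, Pi.single i 1)
    simpa [symp, Pi.single_apply] using this
  · have := hcon (Pi.single i 1, 0)
    simpa [symp, Pi.single_apply] using this

lemma card_PV (n : ℕ) : Fintype.card (PV n) = 4 ^ n := by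
  simp [PV, ← mul_pow]

lemma symp_orth {n : ℕ} (v w : PV n) :
    ∑ j : PV n, (sg (symp v j) : ℂ) * (starRingEnd ℂ) (sg (symp w j) : ℂ) =
      if v = w then (((4 : ℝ) ^ n : ℝ) : ℂ) else 0 := by
  have h : ∀ j, (sg (symp v j) : ℂ) * (starRingEnd ℂ) (sg (symp w j) : ℂ) =
      (sg (symp j (v + w)) : ℂ) := by
    intro j
    rw [Complex.conj_ofReal, ← Complex.ofReal_mul, ← sg_add, symp_comm j, symp_add_left]
  simp only [h]
  split_ifs with hvw
  · subst hvw
    rw [PV_add_self]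
    have : ∀ j : PV n, symp j 0 = 0 := fun j => by simp [symp]
    simp [this, sg_zero, ← mul_pow]
  · have hne : v + w ≠ 0 := by
      intro h0
      apply hvw
      calc v = v + (w + w) := by rw [PV_add_self, add_zero]
        _ = w := by rw [← add_assoc, h0, zero_add]
    obtain ⟨a, ha⟩ := exists_symp_ne _ hne
    rw [← Complex.ofReal_sum, sum_sg_zero (fun j => symp j (v + w))
      (fun a b => symp_add_left a b _) a ha]
    simp

lemma fourier_part {n : ℕ} (t : PV n → ℝ) (ht : ∀ a, |t a| ≤ 1) :
    ∑ a, ∑ c, t a * t c * sg (symp a c) ≤ 8 ^ n := by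
  have hP := parseval (fun v j : PV n => (sg (symp v j) : ℂ)) _ symp_orth (fun a => (t a : ℂ))
  have hP' : ∑ c, (∑ a, t a * sg (symp a c)) ^ 2 = 4 ^ n * ∑ a, t a ^ 2 := by
    have : ∀ c : PV n, ‖∑ a, (t a : ℂ) * (sg (symp a c) : ℂ)‖ ^ 2 =
        (∑ a, t a * sg (symp a c)) ^ 2 := by
      intro c
      rw [← sq_abs (∑ a, t a * sg (symp a c)), ← Real.norm_eq_abs, ← Complex.norm_real]
      push_cast
      rfl
    simp only [this] at hP
    simpa using hP
  have ht2 : ∑ a, t a ^ 2 ≤ 4 ^ n := by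
    calc ∑ a, t a ^ 2 ≤ ∑ a : PV n, (1 : ℝ) :=
          Finset.sum_le_sum fun a _ => (sq_le_one_iff_abs_le_one _).2 (ht a)
      _ = 4 ^ n := by
        rw [Finset.sum_const, Finset.card_univ, card_PV]; simp
  have h0 : 0 ≤ ∑ a, t a ^ 2 := Finset.sum_nonneg fun a _ => sq_nonneg _
  have e : ∑ a, ∑ c, t a * t c * sg (symp a c) = ∑ c, t c * ∑ a, t a * sg (symp a c) := by
    rw [Finset.sum_comm]
    simp only [Finset.mul_sum]
    refine Finset.sum_congr rfl fun c _ => Finset.sum_congr rfl fun a _ => ?_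
    ring
  rw [e]
  apply le_of_sq_le_sq _ (by positivity)
  calc (∑ c, t c * ∑ a, t a * sg (symp a c)) ^ 2 ≤ (∑ c, t c ^ 2) *
        ∑ c, (∑ a, t a * sg (symp a c)) ^ 2 := Finset.sum_mul_sq_le_sq_mul_sq _ _ _
    _ = (∑ c, t c ^ 2) ^ 2 * 4 ^ n := by rw [hP']; ring
    _ ≤ (4 ^ n) ^ 2 * 4 ^ n := by gcongr
    _ = (8 ^ n) ^ 2 := by
      rw [← pow_mul, ← pow_mul, mul_comm n 2, pow_mul, pow_mul, ← mul_pow]; norm_num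

/-- the two point function -/
noncomputable def tf {n : ℕ} (s : PV n → ℝ) (u a : PV n) : ℝ :=
  s a * s (a + u) * sg (wght a (a + u))

lemma tau_bound {n : ℕ} (s : PV n → ℝ) (hs : ∀ a, |s a| ≤ 1) :
    ∑ u, (∑ a, if symp u a = 0 then tf s u a else 0) ^ 2 ≤ 32 ^ n := by
  set κ : PV n → ℂ := fun u => ∑ a, (s a * s (a + u) : ℝ) * phase a (a + u) with hκ
  set A : (Fin n → F2) → (Fin n → F2) → ℂ := fun p q => ∑ v, (s v : ℂ) * TT v p q with hA
  have hre : ∀ u, (∑ a, if symp u a = 0 then tf s u a else 0) = (κ u).re := by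
    intro u
    rw [hκ, Complex.re_sum]
    refine Finset.sum_congr rfl fun a _ => ?_
    rw [Complex.re_ofReal_mul, phase_re, symp_add_right, symp_self, zero_add, symp_comm a u]
    unfold tf
    split_ifs <;> simp
  have hAA : ∀ p r, ∑ q, A p q * A q r = ∑ u, κ u * TT u p r := by
    intro p r
    calc ∑ q, A p q * A q r
        = ∑ q, ∑ v, ∑ w, ((s v : ℂ) * TT v p q) * ((s w : ℂ) * TT w q r) := by
          simp only [hA, Finset.sum_mul_sum]
      _ = ∑ v, ∑ w, ∑ q, ((s v : ℂ) * TT v p q) * ((s w : ℂ) * TT w q r) := by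
          rw [Finset.sum_comm]
          refine Finset.sum_congr rfl fun v _ => ?_
          rw [Finset.sum_comm]
      _ = ∑ v, ∑ w, (s v : ℂ) * (s w : ℂ) * (phase v w * TT (v + w) p r) := by
          refine Finset.sum_congr rfl fun v _ => Finset.sum_congr rfl fun w _ => ?_
          rw [← TT_mul, Finset.mul_sum]
          refine Finset.sum_congr rfl fun q _ => ?_
          ring
      _ = ∑ v, ∑ u, (s v : ℂ) * (s (v + u) : ℂ) * (phase v (v + u) * TT u p r) := by
          refine Finset.sum_congr rfl fun v _ => ?_
          rw [← Equiv.sum_comp (Equiv.addLeft v)]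
          refine Finset.sum_congr rfl fun u _ => ?_
          simp only [Equiv.coe_addLeft]
          rw [← add_assoc v v u, PV_add_self, zero_add]
      _ = ∑ u, κ u * TT u p r := by
          rw [Finset.sum_comm]
          refine Finset.sum_congr rfl fun u _ => ?_
          rw [hκ, Finset.sum_mul]
          refine Finset.sum_congr rfl fun a _ => ?_
          push_cast
          ring
  have hP1 := parseval (fun v (j : (Fin n → F2) × (Fin n → F2)) => TT v j.1 j.2) _ TT_orth
    (fun a => (s a : ℂ))
  have hP2 := parseval (fun v (j : (Fin n → F2) × (Fin n → F2)) => TT v j.1 j.2) _ TT_orth κ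
  simp only [← hAA] at hP2
  have hs2 : ∑ a, ‖(s a : ℂ)‖ ^ 2 ≤ 4 ^ n := by
    calc ∑ a, ‖(s a : ℂ)‖ ^ 2 ≤ ∑ a : PV n, (1 : ℝ) :=
          Finset.sum_le_sum fun a _ => by
            rw [Complex.norm_real, Real.norm_eq_abs, sq_abs]
            exact (sq_le_one_iff_abs_le_one _).2 (hs a)
      _ = 4 ^ n := by
        rw [Finset.sum_const, Finset.card_univ, card_PV]; simp
  have hF : ∑ j : (Fin n → F2) × (Fin n → F2), ‖∑ q, A j.1 q * A q j.2‖ ^ 2 ≤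
      (∑ j : (Fin n → F2) × (Fin n → F2), ‖A j.1 j.2‖ ^ 2) ^ 2 := by
    rw [Fintype.sum_prod_type, Fintype.sum_prod_type, sq]
    conv_rhs => rw [Finset.sum_comm (f := fun x y => ‖A (x, y).1 (x, y).2‖ ^ 2)]
    conv_rhs => rw [← Fintype.sum_prod_type_right (f := fun j : (Fin n → F2) × (Fin n → F2) => ‖A j.1 j.2‖ ^ 2)]
    conv_rhs => 
      enter [1]
      rw [Fintype.sum_prod_type]
    conv_rhs => 
      enter [2]
      rw [Fintype.sum_prod_type_right]
    rw [Finset.sum_mul_sum]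
    refine Finset.sum_le_sum fun p _ => Finset.sum_le_sum fun r _ => ?_
    calc ‖∑ q, A p q * A q r‖ ^ 2 ≤ (∑ q, ‖A p q‖ * ‖A q r‖) ^ 2 := by
          gcongr
          refine (norm_sum_le _ _).trans (le_of_eq ?_)
          simp
      _ ≤ _ := Finset.sum_mul_sq_le_sq_mul_sq _ _ _
  have hle : ∑ u, ‖κ u‖ ^ 2 ≤ 32 ^ n := by
    have h2 : (0 : ℝ) < 2 ^ n := by positivity
    have h0 : 0 ≤ ∑ a, ‖(s a : ℂ)‖ ^ 2 := Finset.sum_nonneg fun a _ => sq_nonneg _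
    have : (2 : ℝ) ^ n * ∑ u, ‖κ u‖ ^ 2 ≤ 2 ^ n * 32 ^ n := by
      rw [← hP2]
      refine hF.trans ?_
      rw [hP1]
      calc ((2 : ℝ) ^ n * ∑ a, ‖(s a : ℂ)‖ ^ 2) ^ 2 ≤ (2 ^ n * 4 ^ n) ^ 2 := by gcongr
        _ = 2 ^ n * 32 ^ n := by
          rw [← mul_pow, ← mul_pow, ← pow_mul, mul_comm n 2, pow_mul]; norm_num
    exact le_of_mul_le_mul_left this h2
  refine le_trans (Finset.sum_le_sum fun u _ => ?_) hle
  rw [hre, ← sq_abs]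
  gcongr
  exact Complex.abs_re_le_norm _

lemma iso_sum_bound {n : ℕ} (s : PV n → ℝ) (hs : ∀ a, |s a| ≤ 1) :
    ∑ u, ∑ a, ∑ c, (if symp u a = 0 ∧ symp u c = 0 ∧ symp a c = 0 then tf s u a * tf s u c else 0)
      ≤ 32 ^ n := by
  set t : PV n → PV n → ℝ := fun u a => if symp u a = 0 then tf s u a else 0 with ht
  have h1 : ∀ u a, |t u a| ≤ 1 := by
    intro u a
    rw [ht]
    dsimp only
    split_ifs
    · unfold tf
      rw [abs_mul, abs_mul, abs_sg, mul_one]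
      exact mul_le_one₀ (hs _) (abs_nonneg _) (hs _)
    · simp
  have e : ∀ u a c, (if symp u a = 0 ∧ symp u c = 0 ∧ symp a c = 0 then tf s u a * tf s u c else 0)
      = (t u a * t u c) / 2 + (t u a * t u c * sg (symp a c)) / 2 := by
    intro u a c
    simp only [ht]
    by_cases h1 : symp u a = 0 <;> by_cases h2 : symp u c = 0 <;> by_cases h3 : symp a c = 0 <;>
      simp [h1, h2, h3, sg] <;> ring
  simp only [e, Finset.sum_add_distrib, ← Finset.sum_div]
  have ha := tau_bound s hs
  have hb : ∑ u, ∑ a, ∑ c, t u a * t u c * sg (symp a c) ≤ 32 ^ n := by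
    calc ∑ u, ∑ a, ∑ c, t u a * t u c * sg (symp a c) ≤ ∑ u : PV n, (8 : ℝ) ^ n :=
          Finset.sum_le_sum fun u _ => fourier_part _ (h1 u)
      _ = 32 ^ n := by
        rw [Finset.sum_const, Finset.card_univ, card_PV]
        simp [← mul_pow]
        norm_num
  have hc : ∀ u, ∑ a, ∑ c, t u a * t u c = (∑ a, t u a) ^ 2 := by
    intro u
    rw [sq, Finset.sum_mul_sum]
  simp only [hc]
  linarith

/-- The symplectic form as a bilinear form. -/
def sympB (n : ℕ) : LinearMap.BilinForm F2 (PV n) :=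
  LinearMap.mk₂ F2 symp symp_add_left symp_smul_left symp_add_right
    (fun r a b => by rw [symp_comm, symp_smul_left, symp_comm b a]; rfl)

lemma finrank_PV (n : ℕ) : Module.finrank F2 (PV n) = 2 * n := by
  simp [PV, Module.finrank_prod, two_mul]

lemma sympB_orth {n : ℕ} (W : Submodule F2 (PV n)) :
    Module.finrank F2 ((sympB n).orthogonal W) + Module.finrank F2 W = 2 * n := by
  have h := LinearMap.BilinForm.finrank_add_finrank_orthogonal' (B := sympB n) W
  have hk : (sympB n).ker = ⊥ := by
    rw [LinearMap.ker_eq_bot']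
    intro v hv
    by_contra h0
    obtain ⟨a, ha⟩ := exists_symp_ne v h0
    apply ha
    rw [symp_comm]
    exact LinearMap.congr_fun hv a
  rw [hk, inf_bot_eq, finrank_bot, add_zero, finrank_PV] at h
  omega

lemma mem_orth {n : ℕ} (W : Submodule F2 (PV n)) (v : PV n) :
    v ∈ (sympB n).orthogonal W ↔ ∀ w ∈ W, symp w v = 0 := Iff.rfl

lemma card_sub {n : ℕ} (W : Submodule F2 (PV n)) :
    Nat.card W = 2 ^ Module.finrank F2 W := by
  rw [Module.natCard_eq_pow_finrank (K := F2)]; simp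

lemma finrank_iso_le {n : ℕ} (W : Submodule F2 (PV n)) (hW : IsIsotropic W) :
    Module.finrank F2 W ≤ n := by
  have h1 : W ≤ (sympB n).orthogonal W := fun v hv w hw => hW w hw v hv
  have := Submodule.finrank_mono h1
  have := sympB_orth W
  omega

lemma F2_cases (r : F2) : r = 0 ∨ r = 1 := by revert r; decide

lemma mem_sup_span {n : ℕ} (W : Submodule F2 (PV n)) (v y : PV n) :
    y ∈ W ⊔ Submodule.span F2 {v} ↔ y ∈ W ∨ y + v ∈ W := by
  constructor
  · intro h
    obtain ⟨w, hw, z, hz, rfl⟩ := Submodule.mem_sup.1 h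
    obtain ⟨r, rfl⟩ := Submodule.mem_span_singleton.1 hz
    have : r = 0 ∨ r = 1 := F2_cases r
    rcases this with rfl | rfl
    · left; simpa using hw
    · right; rw [one_smul, add_assoc, PV_add_self, add_zero]; exact hw
  · rintro (h | h)
    · exact Submodule.mem_sup_left h
    · have : y = (y + v) + v := by rw [add_assoc, PV_add_self, add_zero]
      rw [this]
      exact Submodule.add_mem_sup h (Submodule.mem_span_singleton_self v)

lemma finrank_sup_span {n : ℕ} (W : Submodule F2 (PV n)) (v : PV n) (hv : v ∉ W) :
    Module.finrank F2 (W ⊔ Submodule.span F2 {v} : Submodule F2 (PV n)) =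
      Module.finrank F2 W + 1 := by
  have h := Submodule.finrank_sup_add_finrank_inf_eq W (Submodule.span F2 {v})
  have hv0 : v ≠ 0 := fun h => hv (h ▸ W.zero_mem)
  have hinf : W ⊓ Submodule.span F2 {v} = ⊥ := by
    rw [eq_bot_iff]
    rintro y ⟨hy, hy2⟩
    obtain ⟨r, rfl⟩ := Submodule.mem_span_singleton.1 hy2
    have : r = 0 ∨ r = 1 := F2_cases r
    rcases this with rfl | rfl
    · simp
    · exact absurd (by simpa using hy) hv
  rw [hinf, finrank_bot, finrank_span_singleton hv0] at h
  omega

lemma iso_sup_span {n : ℕ} (W : Submodule F2 (PV n)) (hW : IsIsotropic W) (v : PV n)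
    (hv : ∀ w ∈ W, symp w v = 0) : IsIsotropic (W ⊔ Submodule.span F2 {v}) := by
  intro x hx y hy
  obtain ⟨w, hw, z, hz, rfl⟩ := Submodule.mem_sup.1 hx
  obtain ⟨w', hw', z', hz', rfl⟩ := Submodule.mem_sup.1 hy
  obtain ⟨r, rfl⟩ := Submodule.mem_span_singleton.1 hz
  obtain ⟨r', rfl⟩ := Submodule.mem_span_singleton.1 hz'
  have e : symp w (r' • v) = 0 := by
    rw [symp_comm, symp_smul_left, symp_comm, hv w hw, mul_zero]
  have e' : symp v (r' • v) = 0 := by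
    rw [symp_comm, symp_smul_left, symp_self, mul_zero]
  rw [symp_add_left, symp_add_right, symp_smul_left, symp_add_right, hW w hw w' hw', e, e',
    symp_comm v, hv w' hw']
  simp

noncomputable instance subFintype (n : ℕ) : Fintype (Submodule F2 (PV n)) :=
  Fintype.ofInjective (fun S => (S : Set (PV n))) SetLike.coe_injective

open Classical in
/-- Lagrangians. -/
noncomputable def Lag (n : ℕ) : Finset (Submodule F2 (PV n)) :=
  Finset.univ.filter (fun S => S ∈ Lset n n)

lemma mem_Lag {n : ℕ} (S : Submodule F2 (PV n)) : S ∈ Lag n ↔ S ∈ Lset n n := by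
  simp [Lag]

/-- number of Lagrangians above an isotropic `k`-space -/
def NN (n k : ℕ) : ℕ := ∏ i ∈ Finset.range (n - k), (2 ^ (i + 1) + 1)

lemma NN_pos (n k : ℕ) : 0 < NN n k := Finset.prod_pos fun i _ => by positivity

lemma NN_succ (n k : ℕ) (h : k < n) : NN n k = (2 ^ (n - k) + 1) * NN n (k + 1) := by
  unfold NN
  have : n - k = (n - (k + 1)) + 1 := by omega
  rw [this, Finset.prod_range_succ, mul_comm]

lemma mem_card_filter {n : ℕ} (W : Submodule F2 (PV n)) (p : PV n → Prop) [DecidablePred p]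
    (h : ∀ v, p v ↔ v ∈ W) : (Finset.univ.filter p).card = 2 ^ Module.finrank F2 W := by
  rw [← card_sub, ← Fintype.card_subtype, ← Nat.card_eq_fintype_card]
  exact Nat.card_congr (Equiv.subtypeEquivRight h)

lemma pow_id_aux (n k : ℕ) (hkn : k ≤ n) :
    2 ^ (2 * n - k) - 2 ^ k = (2 ^ (n - k) + 1) * (2 ^ n - 2 ^ k) := by
  obtain ⟨m, rfl⟩ := Nat.exists_eq_add_of_le hkn
  have a1 : 2 * (k + m) - k = k + m + m := by omega
  have a2 : k + m - k = m := by omega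
  rw [a1, a2, add_mul, one_mul, Nat.mul_sub, pow_add, pow_add]
  have : 2 ^ k ≤ 2 ^ k * 2 ^ m := Nat.le_mul_of_pos_right _ (by positivity)
  have h4 : 2 ^ k * 2 ^ m ≤ 2 ^ k * 2 ^ m * 2 ^ m := Nat.le_mul_of_pos_right _ (by positivity)
  have h5 : 2 ^ m * (2 ^ k * 2 ^ m) = 2 ^ k * 2 ^ m * 2 ^ m := by ring
  have h6 : 2 ^ m * 2 ^ k = 2 ^ k * 2 ^ m := by ring
  rw [h5, h6]
  omega

open Classical in
lemma count_above {n : ℕ} (d : ℕ) : ∀ (W : Submodule F2 (PV n)), IsIsotropic W →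
    Module.finrank F2 W + d = n →
    ((Lag n).filter (fun x => W ≤ x)).card = NN n (Module.finrank F2 W) := by
  induction d with
  | zero =>
    intro W hW hd
    have hd' : Module.finrank F2 W = n := hd
    have : (Lag n).filter (fun x => W ≤ x) = {W} := by
      ext x
      simp only [Finset.mem_filter, mem_Lag, Finset.mem_singleton]
      constructor
      · rintro ⟨⟨_, hx2⟩, hle⟩
        exact (Submodule.eq_of_le_of_finrank_eq hle (by rw [hd', hx2])).symm
      · rintro rfl
        exact ⟨⟨hW, hd'⟩, le_rfl⟩
    rw [this, hd']
    simp [NN]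
  | succ d ih =>
    intro W hW hd
    set k := Module.finrank F2 W with hk
    have hdc := Finset.sum_card_bipartiteAbove_eq_sum_card_bipartiteBelow
      (s := (Finset.univ : Finset (PV n)).filter (fun v => v ∈ (sympB n).orthogonal W ∧ v ∉ W))
      (t := (Lag n).filter (fun x => W ≤ x)) (fun v x => v ∈ x)
    have h1 : ∀ v ∈ (Finset.univ : Finset (PV n)).filter
        (fun v => v ∈ (sympB n).orthogonal W ∧ v ∉ W),
        (Finset.bipartiteAbove (fun v x => v ∈ x) ((Lag n).filter (fun x => W ≤ x)) v).card =
          NN n (k + 1) := by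
      intro v hv
      simp only [Finset.mem_filter, Finset.mem_univ, true_and] at hv
      have hr := finrank_sup_span W v hv.2
      rw [← hk] at hr
      rw [← hr, ← ih _ (iso_sup_span W hW v hv.1) (by omega)]
      congr 1
      ext x
      simp only [Finset.bipartiteAbove, Finset.mem_filter, sup_le_iff,
        Submodule.span_singleton_le_iff_mem]
      tauto
    have h2 : ∀ x ∈ (Lag n).filter (fun x => W ≤ x),
        (Finset.bipartiteBelow (fun v x => v ∈ x) ((Finset.univ : Finset (PV n)).filter
        (fun v => v ∈ (sympB n).orthogonal W ∧ v ∉ W)) x).card = 2 ^ n - 2 ^ k := by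
      intro x hx
      simp only [Finset.mem_filter, mem_Lag] at hx
      have e1 := mem_card_filter x (fun v => v ∈ x) (fun v => Iff.rfl)
      have e2 := mem_card_filter W (fun v => v ∈ W) (fun v => Iff.rfl)
      rw [hx.1.2] at e1
      rw [← e1, hk, ← e2, ← Finset.card_sdiff_of_subset]
      · congr 1
        ext v
        simp only [Finset.bipartiteBelow, Finset.mem_filter, Finset.mem_univ, true_and,
          Finset.mem_sdiff]
        constructor
        · tauto
        · rintro ⟨h, h'⟩
          exact ⟨⟨fun w hw => hx.1.1 w (hx.2 hw) v h, h'⟩, h⟩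
      · intro v hv
        simp only [Finset.mem_filter, Finset.mem_univ, true_and] at hv ⊢
        exact hx.2 hv
    have h3 : ((Finset.univ : Finset (PV n)).filter
        (fun v => v ∈ (sympB n).orthogonal W ∧ v ∉ W)).card = 2 ^ (2 * n - k) - 2 ^ k := by
      have e1 := mem_card_filter ((sympB n).orthogonal W)
        (fun v => v ∈ (sympB n).orthogonal W) (fun v => Iff.rfl)
      have e2 := mem_card_filter W (fun v => v ∈ W) (fun v => Iff.rfl)
      have e3 := sympB_orth W
      have e4 : Module.finrank F2 ((sympB n).orthogonal W) = 2 * n - k := by omega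
      rw [e4] at e1
      rw [← e1, hk, ← e2, ← Finset.card_sdiff_of_subset]
      · congr 1
        ext v
        simp
      · intro v hv
        simp only [Finset.mem_filter, Finset.mem_univ, true_and] at hv ⊢
        exact fun w hw => hW w hw v hv
    rw [Finset.sum_congr rfl h1, Finset.sum_congr rfl h2, Finset.sum_const, Finset.sum_const, h3,
      smul_eq_mul, smul_eq_mul] at hdc
    have hkn : k < n := by omega
    rw [NN_succ n k hkn]
    have hp : 0 < 2 ^ n - 2 ^ k := Nat.sub_pos_of_lt (Nat.pow_lt_pow_right (by norm_num) hkn)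
    apply Nat.eq_of_mul_eq_mul_right hp
    rw [← hdc]
    have e := pow_id_aux n k hkn.le
    rw [e]
    ring

open Classical in
lemma count_above' {n : ℕ} (W : Submodule F2 (PV n)) (hW : IsIsotropic W) :
    ((Lag n).filter (fun x => W ≤ x)).card = NN n (Module.finrank F2 W) := by
  have := finrank_iso_le W hW
  exact count_above (n - Module.finrank F2 W) W hW (by omega)

lemma iso_bot {n : ℕ} : IsIsotropic (⊥ : Submodule F2 (PV n)) := by
  intro x hx y hy
  rw [Submodule.mem_bot] at hx
  subst hx
  simp [symp]

lemma card_Lag (n : ℕ) : (Lag n).card = NN n 0 := by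
  classical
  have := count_above' (⊥ : Submodule F2 (PV n)) iso_bot
  rw [finrank_bot] at this
  rw [← this]
  congr 1
  simp

open Classical in
lemma count_one {n : ℕ} (v : PV n) (hv : v ≠ 0) :
    ((Lag n).filter (fun x => v ∈ x)).card = NN n 1 := by
  have h1 := iso_sup_span (⊥ : Submodule F2 (PV n)) iso_bot v
    (by intro w hw; rw [Submodule.mem_bot] at hw; subst hw; simp [symp])
  have h2 := finrank_sup_span (⊥ : Submodule F2 (PV n)) v (by simpa using hv)
  have h3 := count_above' _ h1
  rw [h2, finrank_bot] at h3
  rw [← h3]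
  congr 1
  ext x
  simp

/-- degenerate triples -/
def Dep {n : ℕ} (u a c : PV n) : Prop :=
  u = 0 ∨ a = 0 ∨ a = u ∨ c = 0 ∨ c = u ∨ c = a ∨ c = a + u

open Classical in
lemma count_three {n : ℕ} (u a c : PV n) (hD : ¬ Dep u a c) (h1 : symp u a = 0)
    (h2 : symp u c = 0) (h3 : symp a c = 0) :
    ((Lag n).filter (fun x => u ∈ x ∧ a ∈ x ∧ c ∈ x)).card = NN n 3 := by
  unfold Dep at hD
  push Not at hD
  obtain ⟨d1, d2, d3, d4, d5, d6, d7⟩ := hD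
  have key : ∀ p q : PV n, p + q = 0 → p = q := by
    intro p q h
    calc p = p + (q + q) := by rw [PV_add_self, add_zero]
        _ = q := by rw [← add_assoc, h, zero_add]
  set W1 := (⊥ : Submodule F2 (PV n)) ⊔ Submodule.span F2 {u} with hW1
  have m1 : ∀ y, y ∈ W1 ↔ y = 0 ∨ y + u = 0 := fun y => by
    rw [hW1, mem_sup_span, Submodule.mem_bot, Submodule.mem_bot]
  set W2 := W1 ⊔ Submodule.span F2 {a} with hW2
  have m2 : ∀ y, y ∈ W2 ↔ (y = 0 ∨ y + u = 0) ∨ (y + a = 0 ∨ y + a + u = 0) := fun y => by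
    rw [hW2, mem_sup_span, m1, m1]
  have i1 : IsIsotropic W1 := iso_sup_span (⊥ : Submodule F2 (PV n)) iso_bot u
    (by intro w hw; rw [Submodule.mem_bot] at hw; subst hw; simp [symp])
  have i2 : IsIsotropic W2 := iso_sup_span W1 i1 a (by
    intro w hw
    rcases (m1 w).1 hw with rfl | h
    · simp [symp]
    · rw [key _ _ h]; exact h1)
  have i3 := iso_sup_span W2 i2 c (by
    intro w hw
    rcases (m2 w).1 hw with (rfl | h) | (h | h)
    · simp [symp]
    · rw [key _ _ h]; exact h2
    · rw [key _ _ h]; exact h3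
    · rw [add_assoc] at h; rw [key _ _ h, symp_add_left, h2, h3, add_zero])
  have r1 := finrank_sup_span (⊥ : Submodule F2 (PV n)) u (by simpa using d1)
  have r2 := finrank_sup_span W1 a (by
    rw [m1]; rintro (h | h)
    · exact d2 h
    · exact d3 (key _ _ h))
  have r3 := finrank_sup_span W2 c (by
    rw [m2]; rintro ((h | h) | (h | h))
    · exact d4 h
    · exact d5 (key _ _ h)
    · exact d6 (key _ _ h)
    · rw [add_assoc] at h; exact d7 (key _ _ h))
  rw [finrank_bot] at r1
  have h4 := count_above' _ i3
  rw [r3, hW2, r2, hW1, r1] at h4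
  rw [← h4]
  congr 1
  ext x
  simp [and_assoc]

lemma abs_tf {n : ℕ} (s : PV n → ℝ) (hs : ∀ a, |s a| ≤ 1) (u a : PV n) : |tf s u a| ≤ 1 := by
  unfold tf
  rw [abs_mul, abs_mul, abs_sg, mul_one]
  exact mul_le_one₀ (hs _) (abs_nonneg _) (hs _)

open Classical in
/-- sign of the outcome -/
noncomputable def chi {n : ℕ} (f : (S : Submodule F2 (PV n)) → (S → F2))
    (x : Submodule F2 (PV n)) (v : PV n) : ℝ :=
  if h : v ∈ x then sg (f x ⟨v, h⟩) else 0

open Classical in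
lemma gowers {n : ℕ} (f : (S : Submodule F2 (PV n)) → (S → F2)) (x : Submodule F2 (PV n))
    (hx : x ∈ Lset n n) (hf : IsOutcome x (f x)) (s : PV n → ℝ) :
    (∑ v, s v * chi f x v) ^ 4 ≤ 2 ^ n * ∑ u, ∑ a, ∑ c,
      (if u ∈ x ∧ a ∈ x ∧ c ∈ x then tf s u a * tf s u c else 0) := by
  set h : PV n → ℝ := fun v => s v * chi f x v with hh
  set X : Finset (PV n) := Finset.univ.filter (fun v => v ∈ x) with hX
  have hXc : (X.card : ℝ) = 2 ^ n := by
    have := mem_card_filter x (fun v => v ∈ x) (fun v => Iff.rfl)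
    rw [hx.2] at this
    rw [hX, this]; simp
  have hmul : ∀ u a, h a * h (a + u) =
      if u ∈ x then chi f x u * (if a ∈ x then tf s u a else 0) else 0 := by
    intro u a
    simp only [hh]
    by_cases hu : u ∈ x
    · by_cases ha : a ∈ x
      · have hau : a + u ∈ x := x.add_mem ha hu
        have hfx := hf ⟨a, ha⟩ ⟨a + u, hau⟩
        have e : (⟨a, ha⟩ + ⟨a + u, hau⟩ : x) = ⟨u, hu⟩ := by
          ext1
          change a + (a + u) = u
          rw [← add_assoc, PV_add_self, zero_add]
        rw [e] at hfx
        simp only [chi, hu, ha, hau, dif_pos, if_true, hfx, sg_add, tf]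
        have := sg_mul_self (wght a (a + u))
        linear_combination (-(s a * s (a + u) * sg (f x ⟨a, ha⟩) * sg (f x ⟨a + u, hau⟩))) * this
      · simp [chi, ha, hu]
    · by_cases ha : a ∈ x
      · have : a + u ∉ x := fun h' => hu ((Submodule.add_mem_iff_right x ha).1 h')
        simp [chi, this, hu]
      · simp [chi, ha, hu]
  have hsq : (∑ v, h v) ^ 2 = ∑ u ∈ X, chi f x u * ∑ a ∈ X, tf s u a := by
    rw [sq, Finset.sum_mul_sum]
    have : ∀ a, ∑ b, h a * h b = ∑ u, h a * h (a + u) := fun a =>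
      (Equiv.sum_comp (Equiv.addLeft a) (fun b => h a * h b)).symm
    simp only [this, hmul]
    rw [Finset.sum_comm, hX, Finset.sum_filter]
    refine Finset.sum_congr rfl fun u _ => ?_
    split_ifs with hu
    · rw [Finset.sum_filter, Finset.mul_sum]
    · simp
  have hR : ∑ u, ∑ a, ∑ c, (if u ∈ x ∧ a ∈ x ∧ c ∈ x then tf s u a * tf s u c else 0) =
      ∑ u ∈ X, (chi f x u * ∑ a ∈ X, tf s u a) ^ 2 := by
    rw [hX, Finset.sum_filter]
    refine Finset.sum_congr rfl fun u _ => ?_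
    split_ifs with hu
    · have : chi f x u ^ 2 = 1 := by
        rw [sq]; simp only [chi, hu, dif_pos]; exact sg_mul_self _
      rw [mul_pow, this, one_mul, sq, Finset.sum_mul_sum, Finset.sum_filter]
      refine Finset.sum_congr rfl fun a _ => ?_
      split_ifs with ha
      · rw [Finset.sum_filter]
        simp [hu, ha]
      · simp [ha]
    · simp [hu]
  rw [hR, ← hXc]
  calc (∑ v, h v) ^ 4 = ((∑ v, h v) ^ 2) ^ 2 := by ring
    _ ≤ _ := by rw [hsq]; exact sq_sum_le_card_mul_sum_sq

open Classical in
lemma dep_count {n : ℕ} (X : Finset (PV n)) :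
    ∑ u ∈ X, ∑ a ∈ X, ∑ c ∈ X, (if Dep u a c then (1 : ℝ) else 0) ≤ 7 * (X.card : ℝ) ^ 2 := by
  have h1 : ∀ u a c : PV n, (if Dep u a c then (1 : ℝ) else 0) ≤
      (if u = 0 then 1 else 0) + (if a = 0 then 1 else 0) + (if a = u then 1 else 0) +
      (if c = 0 then 1 else 0) + (if c = u then 1 else 0) + (if c = a then 1 else 0) +
      (if c = a + u then 1 else 0) := by
    intro u a c
    have p : ∀ (q : Prop) [Decidable q], (0 : ℝ) ≤ if q then 1 else 0 := fun q _ => by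
      split_ifs <;> norm_num
    have p1 := p (u = 0)
    have p2 := p (a = 0)
    have p3 := p (a = u)
    have p4 := p (c = 0)
    have p5 := p (c = u)
    have p6 := p (c = a)
    have p7 := p (c = a + u)
    by_cases hD : Dep u a c
    · rw [if_pos hD]
      rcases hD with h | h | h | h | h | h | h
      · rw [if_pos h] at p1 ⊢; linarith
      · rw [if_pos h] at p2 ⊢; linarith
      · rw [if_pos h] at p3 ⊢; linarith
      · rw [if_pos h] at p4 ⊢; linarith
      · rw [if_pos h] at p5 ⊢; linarith
      · rw [if_pos h] at p6 ⊢; linarith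
      · rw [if_pos h] at p7 ⊢; linarith
    · rw [if_neg hD]; linarith
  have h2 : ∀ y : PV n, ∑ c ∈ X, (if c = y then (1 : ℝ) else 0) ≤ 1 := by
    intro y
    rw [Finset.sum_ite_eq']
    split_ifs <;> norm_num
  have hc0 : (0 : ℝ) ≤ X.card := by positivity
  have step : ∀ u ∈ X, ∑ a ∈ X, ∑ c ∈ X, (if Dep u a c then (1 : ℝ) else 0) ≤
      (if u = 0 then 1 else 0) * (X.card : ℝ) ^ 2 + 6 * X.card := by
    intro u _
    have stepa : ∀ a ∈ X, ∑ c ∈ X, (if Dep u a c then (1 : ℝ) else 0) ≤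
      (if u = 0 then 1 else 0) * (X.card : ℝ) + (if a = 0 then 1 else 0) * (X.card : ℝ)
        + (if a = u then 1 else 0) * (X.card : ℝ) + 4 := by
      intro a _
      refine (Finset.sum_le_sum fun c _ => h1 u a c).trans ?_
      simp only [Finset.sum_add_distrib, Finset.sum_const, nsmul_eq_mul]
      have q1 := h2 0
      have q2 := h2 u
      have q3 := h2 a
      have q4 := h2 (a + u)
      linarith
    refine (Finset.sum_le_sum stepa).trans ?_
    simp only [Finset.sum_add_distrib, Finset.sum_const, nsmul_eq_mul, ← Finset.sum_mul]
    have q1 := mul_le_mul_of_nonneg_right (h2 0) hc0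
    have q2 := mul_le_mul_of_nonneg_right (h2 u) hc0
    nlinarith
  refine (Finset.sum_le_sum step).trans ?_
  simp only [Finset.sum_add_distrib, Finset.sum_const, nsmul_eq_mul, ← Finset.sum_mul]
  have q1 := mul_le_mul_of_nonneg_right (h2 0) (sq_nonneg (X.card : ℝ))
  nlinarith

open Classical in
lemma fourth_moment {n : ℕ} (f : (S : Submodule F2 (PV n)) → (S → F2))
    (hf : ∀ S ∈ Lset n n, IsOutcome S (f S)) (s : PV n → ℝ) (hs : ∀ a, |s a| ≤ 1) :
    ∑ x ∈ Lag n, (∑ v, s v * chi f x v) ^ 4 ≤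
      2 ^ n * (NN n 3 * 32 ^ n + 7 * NN n 3 * 16 ^ n + 7 * NN n 0 * 4 ^ n) := by
  have h1 : ∑ x ∈ Lag n, (∑ v, s v * chi f x v) ^ 4 ≤
      ∑ x ∈ Lag n, 2 ^ n * ∑ u, ∑ a, ∑ c,
      (if u ∈ x ∧ a ∈ x ∧ c ∈ x then tf s u a * tf s u c else 0) :=
    Finset.sum_le_sum fun x hx =>
      gowers f x ((mem_Lag x).1 hx) (hf x ((mem_Lag x).1 hx)) s
  refine h1.trans ?_
  rw [← Finset.mul_sum]
  gcongr
  -- swap sums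
  have swap : ∀ g : PV n → PV n → PV n → ℝ,
      ∑ x ∈ Lag n, ∑ u, ∑ a, ∑ c, (if u ∈ x ∧ a ∈ x ∧ c ∈ x then g u a c else 0) =
      ∑ u, ∑ a, ∑ c, (((Lag n).filter (fun x => u ∈ x ∧ a ∈ x ∧ c ∈ x)).card : ℝ) * g u a c := by
    intro g
    rw [Finset.sum_comm]
    refine Finset.sum_congr rfl fun u _ => ?_
    rw [Finset.sum_comm]
    refine Finset.sum_congr rfl fun a _ => ?_
    rw [Finset.sum_comm]
    refine Finset.sum_congr rfl fun c _ => ?_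
    rw [← Finset.sum_filter, Finset.sum_const, nsmul_eq_mul]
  rw [swap]
  have pt : ∀ u a c : PV n,
      (((Lag n).filter (fun x => u ∈ x ∧ a ∈ x ∧ c ∈ x)).card : ℝ) * (tf s u a * tf s u c) ≤
      NN n 3 * (if symp u a = 0 ∧ symp u c = 0 ∧ symp a c = 0 then tf s u a * tf s u c else 0) +
      NN n 3 * (if Dep u a c then 1 else 0) +
      (((Lag n).filter (fun x => u ∈ x ∧ a ∈ x ∧ c ∈ x)).card : ℝ) *
        (if Dep u a c then 1 else 0) := by
    intro u a c
    have ht : |tf s u a * tf s u c| ≤ 1 := by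
      rw [abs_mul]
      exact mul_le_one₀ (abs_tf s hs _ _) (abs_nonneg _) (abs_tf s hs _ _)
    obtain ⟨ht1, ht2⟩ := abs_le.1 ht
    have hN : (0 : ℝ) ≤ NN n 3 := by positivity
    by_cases hiso : symp u a = 0 ∧ symp u c = 0 ∧ symp a c = 0
    · rw [if_pos hiso]
      by_cases hD : Dep u a c
      · rw [if_pos hD]
        have hC : (0 : ℝ) ≤ (((Lag n).filter (fun x => u ∈ x ∧ a ∈ x ∧ c ∈ x)).card : ℝ) := by
          positivity
        nlinarith
      · rw [if_neg hD, count_three u a c hD hiso.1 hiso.2.1 hiso.2.2]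
        linarith
    · have : (Lag n).filter (fun x => u ∈ x ∧ a ∈ x ∧ c ∈ x) = ∅ := by
        rw [Finset.filter_eq_empty_iff]
        rintro x hx ⟨hu, ha, hc⟩
        have hi := ((mem_Lag x).1 hx).1
        exact hiso ⟨hi u hu a ha, hi u hu c hc, hi a ha c hc⟩
      rw [this, if_neg hiso]
      simp only [Finset.card_empty, Nat.cast_zero, zero_mul, mul_zero, zero_add, add_zero]
      split_ifs <;> simp
  refine (Finset.sum_le_sum fun u _ => Finset.sum_le_sum fun a _ =>
    Finset.sum_le_sum fun c _ => pt u a c).trans ?_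
  simp only [Finset.sum_add_distrib]
  rw [← swap]
  simp only [← Finset.mul_sum]
  have b1 := iso_sum_bound s hs
  have b2 := dep_count (Finset.univ : Finset (PV n))
  rw [Finset.card_univ, card_PV] at b2
  have e16 : ((4 ^ n : ℕ) : ℝ) ^ 2 = 16 ^ n := by
    push_cast; rw [← pow_mul, mul_comm, pow_mul]; norm_num
  rw [e16] at b2
  have b3 : ∑ x ∈ Lag n, ∑ u, ∑ a, ∑ c,
      (if u ∈ x ∧ a ∈ x ∧ c ∈ x then (if Dep u a c then (1 : ℝ) else 0) else 0) ≤
      7 * NN n 0 * 4 ^ n := by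
    have : ∀ x ∈ Lag n, ∑ u, ∑ a, ∑ c,
      (if u ∈ x ∧ a ∈ x ∧ c ∈ x then (if Dep u a c then (1 : ℝ) else 0) else 0) ≤ 7 * 4 ^ n := by
      intro x hx
      have hc := mem_card_filter x (fun v => v ∈ x) (fun v => Iff.rfl)
      rw [((mem_Lag x).1 hx).2] at hc
      have := dep_count (Finset.univ.filter (fun v => v ∈ x))
      rw [hc] at this
      have e4 : ((2 ^ n : ℕ) : ℝ) ^ 2 = 4 ^ n := by
        push_cast; rw [← pow_mul, mul_comm, pow_mul]; norm_num
      rw [e4] at this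
      refine le_trans (le_of_eq ?_) this
      rw [Finset.sum_filter]
      refine Finset.sum_congr rfl fun u _ => ?_
      split_ifs with hu
      · rw [Finset.sum_filter]
        refine Finset.sum_congr rfl fun a _ => ?_
        split_ifs with ha
        · rw [Finset.sum_filter]
          simp [hu, ha]
        · simp [ha]
      · simp [hu]
    refine (Finset.sum_le_sum this).trans ?_
    rw [Finset.sum_const, nsmul_eq_mul, card_Lag]
    apply le_of_eq; ring
  have hN : (0 : ℝ) ≤ NN n 3 := by positivity
  have c1 := mul_le_mul_of_nonneg_left b1 hN
  have c2 := mul_le_mul_of_nonneg_left b2 hN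
  linarith

lemma abs_chi_le {n : ℕ} (f : (S : Submodule F2 (PV n)) → (S → F2))
    (x : Submodule F2 (PV n)) (v : PV n) : |chi f x v| ≤ 1 := by
  unfold chi
  split_ifs
  · rw [abs_sg]
  · simp

/-- bias of the value assigned to `v` -/
noncomputable def bias {n : ℕ} (f : (S : Submodule F2 (PV n)) → (S → F2)) (v : PV n) : ℝ :=
  if v = 0 then 0 else (∑ x ∈ Lag n, chi f x v) / NN n 1

lemma mem_span_F2 {n : ℕ} (v y : PV n) : y ∈ Submodule.span F2 {v} ↔ y = 0 ∨ y = v := by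
  rw [Submodule.mem_span_singleton]
  constructor
  · rintro ⟨r, rfl⟩
    rcases F2_cases r with rfl | rfl <;> simp
  · rintro (rfl | rfl)
    · exact ⟨0, by simp⟩
    · exact ⟨1, by simp⟩

open Classical in
lemma outcomeCount_eq {n : ℕ} (f : (S : Submodule F2 (PV n)) → (S → F2)) (v : PV n) (hv : v ≠ 0)
    (c : F2) : outcomeCount n f (Submodule.span F2 {v}) c =
      ((Lag n).filter (fun x => ∃ h : v ∈ x, f x ⟨v, h⟩ = c)).card := by
  unfold outcomeCount
  rw [Nat.card_coe_set_eq, ← Set.ncard_coe_finset]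
  congr 1
  ext x
  simp only [Set.mem_ofPred_eq, Finset.coe_filter, mem_Lag]
  refine and_congr_right fun _ => ?_
  constructor
  · rintro ⟨h, y, hy, hy0, hfy⟩
    rcases (mem_span_F2 v y).1 hy with rfl | rfl
    · exact absurd rfl hy0
    · exact ⟨h hy, hfy⟩
  · rintro ⟨h, hfy⟩
    exact ⟨(Submodule.span_singleton_le_iff_mem v x).2 h, v, Submodule.mem_span_singleton_self v,
      hv, hfy⟩

open Classical in
lemma counts {n : ℕ} (f : (S : Submodule F2 (PV n)) → (S → F2)) (v : PV n) (hv : v ≠ 0) :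
    (outcomeCount n f (Submodule.span F2 {v}) 0 : ℝ) +
      outcomeCount n f (Submodule.span F2 {v}) 1 = NN n 1 ∧
    (outcomeCount n f (Submodule.span F2 {v}) 0 : ℝ) -
      outcomeCount n f (Submodule.span F2 {v}) 1 = ∑ x ∈ Lag n, chi f x v := by
  rw [outcomeCount_eq f v hv, outcomeCount_eq f v hv, ← count_one v hv]
  simp only [Finset.card_filter, Nat.cast_sum, ← Finset.sum_add_distrib, ← Finset.sum_sub_distrib]
  constructor
  · refine Finset.sum_congr rfl fun x _ => ?_
    by_cases h : v ∈ x
    · rcases F2_cases (f x ⟨v, h⟩) with h1 | h1 <;> simp [h, h1]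
    · simp [h]
  · refine Finset.sum_congr rfl fun x _ => ?_
    by_cases h : v ∈ x
    · rcases F2_cases (f x ⟨v, h⟩) with h1 | h1 <;> simp [h, h1, chi, sg]
    · simp [h, chi]

lemma abs_bias_le {n : ℕ} (f : (S : Submodule F2 (PV n)) → (S → F2)) (v : PV n) :
    |bias f v| ≤ 1 := by
  unfold bias
  split_ifs with hv
  · simp
  · obtain ⟨h1, h2⟩ := counts f v hv
    have hN : (0 : ℝ) < NN n 1 := by exact_mod_cast NN_pos n 1
    rw [abs_div, abs_of_pos hN, div_le_one hN, ← h1, ← h2, abs_le]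
    have a : (0 : ℝ) ≤ outcomeCount n f (Submodule.span F2 {v}) 0 := by positivity
    have b : (0 : ℝ) ≤ outcomeCount n f (Submodule.span F2 {v}) 1 := by positivity
    constructor <;> linarith

lemma minority_eq {n : ℕ} (f : (S : Submodule F2 (PV n)) → (S → F2)) (v : PV n) (hv : v ≠ 0) :
    minorityFrac n f (Submodule.span F2 {v}) * (1 - minorityFrac n f (Submodule.span F2 {v})) =
      (1 - bias f v ^ 2) / 4 := by
  obtain ⟨h1, h2⟩ := counts f v hv
  have hN : (0 : ℝ) < NN n 1 := by exact_mod_cast NN_pos n 1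
  unfold minorityFrac bias
  rw [if_neg hv, ← h2, ← h1]
  rw [← h1] at hN
  rcases le_total (outcomeCount n f (Submodule.span F2 {v}) 0 : ℝ)
    (outcomeCount n f (Submodule.span F2 {v}) 1 : ℝ) with h | h
  · rw [min_eq_left h]
    field_simp
    ring
  · rw [min_eq_right h]
    field_simp
    ring

lemma bijOn_span (n : ℕ) :
    Set.BijOn (fun v : PV n => Submodule.span F2 {v}) ((Finset.univ.erase 0 : Finset (PV n)) : Set (PV n))
      (Lset n 1) := by
  refine ⟨?_, ?_, ?_⟩
  · intro v hv
    have hv0 : v ≠ 0 := by simpa using hv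
    refine ⟨?_, finrank_span_singleton hv0⟩
    intro x hx y hy
    rcases (mem_span_F2 v x).1 hx with rfl | rfl
    · simp [symp]
    · rcases (mem_span_F2 x y).1 hy with rfl | rfl
      · simp [symp]
      · exact symp_self _
  · intro v hv w hw h
    have hv0 : v ≠ 0 := by simpa using hv
    have : v ∈ Submodule.span F2 {w} := by
      have h' : Submodule.span F2 {v} = Submodule.span F2 {w} := h
      rw [← h']; exact Submodule.mem_span_singleton_self v
    rcases (mem_span_F2 w v).1 this with h0 | h0
    · exact absurd h0 hv0
    · exact h0
  · rintro W ⟨_, hW⟩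
    obtain ⟨⟨v, hv⟩, hv0, hspan⟩ := finrank_eq_one_iff'.1 hW
    refine ⟨v, by simpa using hv0, ?_⟩
    apply le_antisymm
    · exact (Submodule.span_singleton_le_iff_mem v W).2 hv
    · intro y hy
      obtain ⟨c, hc⟩ := hspan ⟨y, hy⟩
      exact Submodule.mem_span_singleton.2 ⟨c, congrArg Subtype.val hc⟩

lemma card_erase (n : ℕ) : ((Finset.univ.erase 0 : Finset (PV n)).card : ℝ) = 4 ^ n - 1 := by
  rw [Finset.card_erase_of_mem (Finset.mem_univ _), Finset.card_univ, card_PV, Nat.cast_sub]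
  · simp
  · exact Nat.one_le_pow _ _ (by norm_num)

lemma card_Lset_one (n : ℕ) : (Nat.card (Lset n 1) : ℝ) = 4 ^ n - 1 := by
  rw [← card_erase, ← Nat.card_congr (bijOn_span n).equiv, Nat.card_coe_set_eq,
    Set.ncard_coe_finset]

lemma lhs_eq {n : ℕ} (hn : 2 ≤ n) (f : (S : Submodule F2 (PV n)) → (S → F2)) :
    (1 / (Nat.card (Lset n 1) : ℝ)) *
            ∑ᶠ w ∈ Lset n 1, minorityFrac n f w * (1 - minorityFrac n f w) =
      1 / 4 - (∑ v, bias f v ^ 2) / (4 * (4 ^ n - 1)) := by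
  have h4 : (1 : ℝ) < 4 ^ n := one_lt_pow₀ (by norm_num) (by omega)
  have e := finsum_mem_eq_of_bijOn (f := fun v : PV n => (1 - bias f v ^ 2) / 4)
    (g := fun w => minorityFrac n f w * (1 - minorityFrac n f w)) _ (bijOn_span n)
    (fun v hv => (minority_eq f v (by simpa using hv)).symm)
  rw [← e, finsum_mem_coe_finset, card_Lset_one, ← Finset.sum_div, Finset.sum_sub_distrib,
    Finset.sum_const, nsmul_eq_mul, mul_one, card_erase]
  have : ∑ v ∈ (Finset.univ.erase 0 : Finset (PV n)), bias f v ^ 2 = ∑ v, bias f v ^ 2 := by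
    apply Finset.sum_erase
    simp [bias]
  rw [this]
  have h5 : (4 : ℝ) ^ n - 1 ≠ 0 := by linarith
  field_simp

lemma Q_le {n : ℕ} (f : (S : Submodule F2 (PV n)) → (S → F2)) :
    ∑ v, bias f v ^ 2 ≤ 4 ^ n - 1 := by
  have : ∑ v ∈ (Finset.univ.erase 0 : Finset (PV n)), bias f v ^ 2 = ∑ v, bias f v ^ 2 := by
    apply Finset.sum_erase
    simp [bias]
  rw [← this, ← card_erase]
  calc _ ≤ ∑ v ∈ (Finset.univ.erase 0 : Finset (PV n)), (1 : ℝ) :=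
        Finset.sum_le_sum fun v _ => (sq_le_one_iff_abs_le_one _).2 (abs_bias_le f v)
    _ = _ := by simp

lemma Q_fourth {n : ℕ} (hn : 3 ≤ n) (f : (S : Submodule F2 (PV n)) → (S → F2))
    (hf : ∀ S ∈ Lset n n, IsOutcome S (f S)) :
    (∑ v, bias f v ^ 2) ^ 4 ≤ 71 * (2 ^ n) ^ 3 * (2 ^ n + 1) ^ 4 := by
  set Q := ∑ v, bias f v ^ 2 with hQ
  have hN1 : (0 : ℝ) < NN n 1 := by exact_mod_cast NN_pos n 1
  have hN3 : (0 : ℝ) < NN n 3 := by exact_mod_cast NN_pos n 3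
  have hN0 : (0 : ℝ) < NN n 0 := by exact_mod_cast NN_pos n 0
  have e1 : NN n 1 * Q = ∑ x ∈ Lag n, ∑ v, bias f v * chi f x v := by
    rw [Finset.sum_comm, hQ, Finset.mul_sum]
    refine Finset.sum_congr rfl fun v _ => ?_
    rw [← Finset.mul_sum]
    by_cases hv : v = 0
    · simp [bias, hv]
    · have : ∑ x ∈ Lag n, chi f x v = NN n 1 * bias f v := by
        rw [bias, if_neg hv]; field_simp
      rw [this]; ring
  have e2 := fourth_moment f hf (bias f) (abs_bias_le f)
  have e3 : (NN n 1 * Q) ^ 4 ≤ (NN n 0 : ℝ) ^ 3 *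
      ∑ x ∈ Lag n, (∑ v, bias f v * chi f x v) ^ 4 := by
    rw [e1, ← card_Lag]
    set g : Submodule F2 (PV n) → ℝ := fun x => ∑ v, bias f v * chi f x v
    have g1 : (∑ x ∈ Lag n, g x) ^ 2 ≤ (Lag n).card * ∑ x ∈ Lag n, g x ^ 2 :=
      sq_sum_le_card_mul_sum_sq
    have g2 : (∑ x ∈ Lag n, g x ^ 2) ^ 2 ≤ (Lag n).card * ∑ x ∈ Lag n, (g x ^ 2) ^ 2 :=
      sq_sum_le_card_mul_sum_sq
    calc (∑ x ∈ Lag n, g x) ^ 4 = ((∑ x ∈ Lag n, g x) ^ 2) ^ 2 := by ring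
      _ ≤ ((Lag n).card * ∑ x ∈ Lag n, g x ^ 2) ^ 2 := by gcongr
      _ = ((Lag n).card : ℝ) ^ 2 * (∑ x ∈ Lag n, g x ^ 2) ^ 2 := by ring
      _ ≤ ((Lag n).card : ℝ) ^ 2 * ((Lag n).card * ∑ x ∈ Lag n, (g x ^ 2) ^ 2) := by gcongr
      _ = ((Lag n).card : ℝ) ^ 3 * ∑ x ∈ Lag n, g x ^ 4 := by
        simp only [← pow_mul]; ring
  have r0 : (NN n 0 : ℝ) = (2 ^ n + 1) * NN n 1 := by
    have := NN_succ n 0 (by omega)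
    rw [this]; push_cast; simp
  have r3 : (8 : ℝ) ^ n * NN n 3 ≤ 8 * NN n 0 := by
    have a0 := NN_succ n 0 (by omega)
    have a1 := NN_succ n 1 (by omega)
    have a2 := NN_succ n 2 (by omega)
    obtain ⟨m, rfl⟩ := Nat.exists_eq_add_of_le hn
    rw [a0, a1, a2]
    have b0 : 3 + m - 0 = m + 3 := by omega
    have b1 : 3 + m - 1 = m + 2 := by omega
    have b2 : 3 + m - 2 = m + 1 := by omega
    rw [b0, b1, b2]
    push_cast
    have : (8 : ℝ) ^ (3 + m) = 512 * (2 ^ m) ^ 3 := by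
      rw [pow_add, ← pow_mul, mul_comm m 3, pow_mul]; norm_num
    rw [this, ← mul_assoc, ← mul_assoc, ← mul_assoc]
    apply mul_le_mul_of_nonneg_right _ hN3.le
    rw [pow_add, pow_add, pow_add]
    have hy : (0 : ℝ) < 2 ^ m := by positivity
    generalize (2 : ℝ) ^ m = y at hy
    have : 8 * ((y * 2 ^ 3 + 1) * (y * 2 ^ 2 + 1) * (y * 2 ^ 1 + 1)) - 512 * y ^ 3 =
      8 * (56 * y ^ 2 + 14 * y + 1) := by ring
    have : 0 ≤ 8 * (56 * y ^ 2 + 14 * y + 1) := by positivity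
    linarith
  have hy : (1 : ℝ) ≤ 2 ^ n := one_le_pow₀ (by norm_num)
  have p4 : (4 : ℝ) ^ n = (2 ^ n) ^ 2 := by rw [← pow_mul, mul_comm, pow_mul]; norm_num
  have p8 : (8 : ℝ) ^ n = (2 ^ n) ^ 3 := by rw [← pow_mul, mul_comm, pow_mul]; norm_num
  have p16 : (16 : ℝ) ^ n = (2 ^ n) ^ 4 := by rw [← pow_mul, mul_comm, pow_mul]; norm_num
  have p32 : (32 : ℝ) ^ n = (2 ^ n) ^ 5 := by rw [← pow_mul, mul_comm, pow_mul]; norm_num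
  rw [p32, p16, p4] at e2
  rw [p8] at r3
  generalize (2 : ℝ) ^ n = y at *
  have hbr : (NN n 3 * y ^ 5 + 7 * NN n 3 * y ^ 4 + 7 * NN n 0 * y ^ 2 : ℝ) ≤
      71 * NN n 0 * y ^ 2 := by
    have t1 : (NN n 3 * y ^ 5 : ℝ) ≤ 8 * NN n 0 * y ^ 2 := by
      calc (NN n 3 * y ^ 5 : ℝ) = (y ^ 3 * NN n 3) * y ^ 2 := by ring
        _ ≤ _ := by gcongr
    have t2 : (NN n 3 * y ^ 4 : ℝ) ≤ NN n 3 * y ^ 5 := by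
      gcongr
      norm_num
    linarith
  have hfin : (NN n 1 * Q) ^ 4 ≤ (NN n 1 : ℝ) ^ 4 * (71 * y ^ 3 * (y + 1) ^ 4) := by
    calc (NN n 1 * Q) ^ 4 ≤ (NN n 0 : ℝ) ^ 3 * (y * (71 * NN n 0 * y ^ 2)) := by
          refine e3.trans ?_
          gcongr
          refine e2.trans ?_
          gcongr
      _ = _ := by rw [r0]; ring
  rw [mul_pow] at hfin
  exact le_of_mul_le_mul_left hfin (by positivity)

/-- **Inconsistency bound.** There is `ε ∈ (0,1)` such that for every even `n ≥ 2` and every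
contextual hidden variable assignment (a family of outcomes on all maximal isotropic
subspaces of `F2^{2n}`), the average over `w ∈ L^n_1` of `m_w(1 − m_w)` is at least
`1/4 − ε^n`. -/
theorem cval_ge_quarter :
    ∃ ε : ℝ, ε ∈ Set.Ioo (0 : ℝ) 1 ∧ ∀ n : ℕ, Even n → 2 ≤ n →
      ∀ f : (S : Submodule F2 (PV n)) → (S → F2),
        (∀ S ∈ Lset n n, IsOutcome S (f S)) →
        (1 / (Nat.card (Lset n 1) : ℝ)) *
            ∑ᶠ w ∈ Lset n 1, minorityFrac n f w * (1 - minorityFrac n f w)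
          ≥ 1 / 4 - ε ^ n := by
  refine ⟨99 / 100, ⟨by norm_num, by norm_num⟩, ?_⟩
  intro n _ hn f hf
  rw [lhs_eq hn f]
  have hM : (0 : ℝ) < 4 ^ n - 1 := by
    have : (1 : ℝ) < 4 ^ n := one_lt_pow₀ (by norm_num) (by omega)
    linarith
  suffices h : (∑ v, bias f v ^ 2) / (4 * (4 ^ n - 1)) ≤ (99 / 100 : ℝ) ^ n by linarith
  rw [div_le_iff₀ (by positivity)]
  rcases lt_or_ge n 20 with hs | hl
  · have h1 := Q_le f
    have h2 : (99 / 100 : ℝ) ^ 20 ≤ (99 / 100 : ℝ) ^ n :=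
      pow_le_pow_of_le_one (by norm_num) (by norm_num) hs.le
    have h3 : (1 / 4 : ℝ) ≤ (99 / 100 : ℝ) ^ 20 := by norm_num
    nlinarith
  · have h1 := Q_fourth (by omega) f hf
    apply le_of_pow_le_pow_left₀ (n := 4) (by norm_num) (by positivity)
    refine h1.trans ?_
    have p4 : (4 : ℝ) ^ n = (2 ^ n) ^ 2 := by rw [← pow_mul, mul_comm, pow_mul]; norm_num
    have he : (71 : ℝ) ≤ 16 * (2 ^ n * ((99 / 100) ^ n) ^ 4) := by
      have h2 : (2 : ℝ) ^ n * ((99 / 100) ^ n) ^ 4 = (2 * (99 / 100) ^ 4) ^ n := by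
        rw [mul_pow, ← pow_mul, ← pow_mul, mul_comm n 4]
      rw [h2]
      have h3 : (3 / 2 : ℝ) ^ n ≤ (2 * (99 / 100) ^ 4) ^ n := by gcongr; norm_num
      have h4 : (3 / 2 : ℝ) ^ 20 ≤ (3 / 2 : ℝ) ^ n := pow_le_pow_right₀ (by norm_num) hl
      have h5 : (100 : ℝ) ≤ (3 / 2 : ℝ) ^ 20 := by norm_num
      linarith
    have hy : (2 : ℝ) ≤ 2 ^ n := by
      calc (2 : ℝ) = 2 ^ 1 := by norm_num
        _ ≤ 2 ^ n := pow_le_pow_right₀ (by norm_num) (by omega)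
    rw [p4]
    have hE : (0 : ℝ) ≤ ((99 / 100) ^ n) ^ 4 := by positivity
    have e1 : ((99 / 100 : ℝ) ^ n * (4 * ((2 ^ n) ^ 2 - 1))) ^ 4 =
        ((99 / 100) ^ n) ^ 4 * (256 * (2 ^ n - 1) ^ 4 * (2 ^ n + 1) ^ 4) := by ring
    rw [e1]
    generalize ((99 / 100 : ℝ) ^ n) ^ 4 = E at *
    generalize (2 : ℝ) ^ n = y at *
    have h6 : (y / 2) ^ 4 ≤ (y - 1) ^ 4 := by
      have : y / 2 ≤ y - 1 := by linarith
      gcongr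
    calc 71 * y ^ 3 * (y + 1) ^ 4 ≤ (16 * (y * E)) * y ^ 3 * (y + 1) ^ 4 := by gcongr
      _ = E * (256 * (y / 2) ^ 4 * (y + 1) ^ 4) := by ring
      _ ≤ _ := by gcongr
end
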